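/- arXiv:2501.07831 — 3 statements merged into one kernel-verified Lean document; each statement's English description precedes it below -/
import Mathlib

section
/- Let K > 0, U_C = 2μ/(γ+1), and let U^sp : (0,∞) → (0,U_C) be the inverse of the strictly decreasing bijection Φ(U) = K·(U_C − U)^((1−μ)/μ)·U^(−1/μ). Then U^sp is differentiable, satisfies y·(U^sp)'(y) = g(U^sp(y)) for all y ∈ (0,∞), and has the asymptotics lim_{y→∞} y^μ·U^sp(y) = K^μ·U_C^(1−μ) and lim_{y→0⁺} (U_C − U^sp(y))·y^(−μ/(1−μ)) = U_C^(1/(1−μ))·K^(−μ/(1−μ)). -/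
open Set Filter Topology

noncomputable def UC (γ μ : ℝ) : ℝ := 2 * μ / (γ + 1)
/-- Right-hand side of the self-similar Burgers ODE `y dU/dy = g(U)`. -/
noncomputable def g (γ μ U : ℝ) : ℝ := -(((γ + 1) * U - 2 * μ) * U) / ((γ + 1) * U - 2)
/-- `Φ(U) = K (U_C - U)^((1-μ)/μ) U^(-1/μ)` on `(0, U_C)`. -/
noncomputable def Φ (γ μ K U : ℝ) : ℝ :=
  K * (UC γ μ - U) ^ ((1 - μ) / μ) * U ^ (-(1 / μ))

/-!
The ODE is the statement that `g` is the reciprocal of the logarithmic derivative of `Φ`: one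
computes `Φ' = Φ / g`. Since `g < 0` on `(0, U_C)`, this makes `Φ` strictly decreasing there, and
the inverse function theorem gives `U' = g(U) / y` for its inverse. Monotonicity also forces
`U → 0` as `y → ∞` and `U → U_C` as `y → 0⁺`. The asymptotics follow by raising `y = Φ(U)` to the
power that makes the vanishing factor linear:
`y^μ U = K^μ (U_C - U)^(1-μ)` and
`(U_C - U) y^(-μ/(1-μ)) = U^(1/(1-μ)) K^(-μ/(1-μ))`.
-/

section Order

variable {ι α β : Type*} [LinearOrder α] [TopologicalSpace α] [OrderTopology α]
  [DenselyOrdered α] [Preorder β] {f : α → β} {a b : α} {u : ι → α} {l : Filter ι}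

theorem tendsto_nhds_left_of_antitoneOn_Ioo (hf : AntitoneOn f (Ioo a b)) (hab : a < b)
    (hu : ∀ᶠ i in l, u i ∈ Ioo a b) (hfu : ∀ c ∈ Ioo a b, ∀ᶠ i in l, f c < f (u i)) :
    Tendsto u l (𝓝 a) := by
  refine tendsto_order.2 ⟨fun a' ha' => hu.mono fun i hi => ha'.trans hi.1, fun a' ha' => ?_⟩
  obtain ⟨c, hac, hc⟩ := exists_between (lt_min ha' hab)
  obtain ⟨hca', hcb⟩ := lt_min_iff.1 hc
  filter_upwards [hu, hfu c ⟨hac, hcb⟩] with i hi hlt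
  by_contra! hle
  exact (hf ⟨hac, hcb⟩ hi (hca'.le.trans hle)).not_gt hlt

theorem tendsto_nhds_right_of_antitoneOn_Ioo (hf : AntitoneOn f (Ioo a b)) (hab : a < b)
    (hu : ∀ᶠ i in l, u i ∈ Ioo a b) (hfu : ∀ c ∈ Ioo a b, ∀ᶠ i in l, f (u i) < f c) :
    Tendsto u l (𝓝 b) :=
  tendsto_nhds_left_of_antitoneOn_Ioo (α := αᵒᵈ) (β := βᵒᵈ) (f := f) (b := a)
    (fun _ hx _ hy hxy => hf hy.symm hx.symm hxy) hab (hu.mono fun _ hi => hi.symm)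
    fun c hc => hfu c hc.symm

end Order

variable {γ μ K U : ℝ}

theorem UC_pos_iff (hμ0 : 0 < μ) : 0 < UC γ μ ↔ 0 < γ + 1 :=
  div_pos_iff_of_pos_left (by positivity)

theorem UC_sub_mul_pos (hμ1 : μ ≤ 1) (hU : U ∈ Ioo 0 (UC γ μ)) : 0 < UC γ μ - μ * U := by
  nlinarith [hU.1, hU.2]

theorem g_eq_of_ne_zero (hγ : γ + 1 ≠ 0) (hμ : μ ≠ 0) :
    g γ μ U = -(μ * U * (UC γ μ - U) / (UC γ μ - μ * U)) := by
  have hUC : (γ + 1) * UC γ μ = 2 * μ := mul_div_cancel₀ _ hγ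
  have hnum : (γ + 1) * U - 2 * μ = -((γ + 1) * (UC γ μ - U)) := by linear_combination hUC
  have hden : (γ + 1) * U - 2 = -((γ + 1) / μ * (UC γ μ - μ * U)) := by
    field_simp
    linear_combination hUC
  rw [g, hnum, hden]
  field_simp

theorem g_eq_of_mem_Ioo (hμ0 : 0 < μ) (hU : U ∈ Ioo 0 (UC γ μ)) :
    g γ μ U = -(μ * U * (UC γ μ - U) / (UC γ μ - μ * U)) :=
  g_eq_of_ne_zero ((UC_pos_iff hμ0).1 (hU.1.trans hU.2)).ne' hμ0.ne'

theorem g_neg (hμ0 : 0 < μ) (hμ1 : μ ≤ 1) (hU : U ∈ Ioo 0 (UC γ μ)) : g γ μ U < 0 := by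
  rw [g_eq_of_mem_Ioo hμ0 hU]
  have hgap : 0 < UC γ μ - U := sub_pos.2 hU.2
  exact neg_neg_of_pos
    (div_pos (mul_pos (mul_pos hμ0 hU.1) hgap) (UC_sub_mul_pos hμ1 hU))

theorem Φ_pos (hK : 0 < K) (hU : U ∈ Ioo 0 (UC γ μ)) : 0 < Φ γ μ K U :=
  mul_pos (mul_pos hK (Real.rpow_pos_of_pos (sub_pos.2 hU.2) _)) (Real.rpow_pos_of_pos hU.1 _)

theorem hasStrictDerivAt_Φ (hμ0 : 0 < μ) (hμ1 : μ ≤ 1) (hU : U ∈ Ioo 0 (UC γ μ)) :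
    HasStrictDerivAt (Φ γ μ K) (Φ γ μ K U / g γ μ U) U := by
  have hU0 : 0 < U := hU.1
  have hgap : 0 < UC γ μ - U := sub_pos.2 hU.2
  have hden : UC γ μ - μ * U ≠ 0 := (UC_sub_mul_pos hμ1 hU).ne'
  have hderiv_gap : HasStrictDerivAt (fun V : ℝ => (UC γ μ - V) ^ ((1 - μ) / μ))
      ((1 - μ) / μ * (UC γ μ - U) ^ ((1 - μ) / μ - 1) * -1) U :=
    (Real.hasStrictDerivAt_rpow_const_of_ne hgap.ne' _).comp U
      ((hasStrictDerivAt_id U).const_sub (UC γ μ))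
  refine ((hderiv_gap.const_mul K).mul
    (Real.hasStrictDerivAt_rpow_const_of_ne hU0.ne' (-(1 / μ)))).congr_deriv ?_
  rw [g_eq_of_mem_Ioo hμ0 hU, Φ, Real.rpow_sub_one hgap.ne', Real.rpow_sub_one hU0.ne']
  field_simp [hden]
  ring

theorem strictAntiOn_Φ (hμ0 : 0 < μ) (hμ1 : μ ≤ 1) (hK : 0 < K) :
    StrictAntiOn (Φ γ μ K) (Ioo 0 (UC γ μ)) := by
  refine strictAntiOn_of_deriv_neg (convex_Ioo _ _)
    (fun U hU => (hasStrictDerivAt_Φ hμ0 hμ1 hU).hasDerivAt.continuousAt.continuousWithinAt)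
    fun U hU => ?_
  rw [interior_Ioo] at hU
  rw [(hasStrictDerivAt_Φ hμ0 hμ1 hU).hasDerivAt.deriv]
  exact div_neg_of_pos_of_neg (Φ_pos hK hU) (g_neg hμ0 hμ1 hU)

theorem Φ_rpow (hK : 0 ≤ K) (hU : U ∈ Icc 0 (UC γ μ)) (p : ℝ) :
    Φ γ μ K U ^ p = K ^ p * (UC γ μ - U) ^ ((1 - μ) / μ * p) * U ^ (-(1 / μ) * p) := by
  have hgap : 0 ≤ UC γ μ - U := sub_nonneg.2 hU.2
  have hU0 : 0 ≤ U := hU.1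
  rw [Φ, Real.mul_rpow (by positivity) (by positivity), Real.mul_rpow hK (by positivity),
    Real.rpow_mul hgap, Real.rpow_mul hU0]

theorem Φ_rpow_mul_self (hμ : μ ≠ 0) (hK : 0 ≤ K) (hU : U ∈ Ioc 0 (UC γ μ)) :
    Φ γ μ K U ^ μ * U = K ^ μ * (UC γ μ - U) ^ (1 - μ) := by
  have hU0 : U ≠ 0 := hU.1.ne'
  rw [Φ_rpow hK (Ioc_subset_Icc_self hU), div_mul_cancel₀ _ hμ, neg_mul,
    one_div_mul_cancel hμ, Real.rpow_neg_one, inv_mul_cancel_right₀ hU0]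

theorem UC_sub_mul_Φ_rpow (hμ0 : μ ≠ 0) (hμ1 : μ ≠ 1) (hK : 0 ≤ K)
    (hU : U ∈ Ico 0 (UC γ μ)) :
    (UC γ μ - U) * Φ γ μ K U ^ (-(μ / (1 - μ))) =
      U ^ (1 / (1 - μ)) * K ^ (-(μ / (1 - μ))) := by
  have hgap : UC γ μ - U ≠ 0 := (sub_pos.2 hU.2).ne'
  have hμ1' : 1 - μ ≠ 0 := sub_ne_zero.2 hμ1.symm
  have hexp_gap : (1 - μ) / μ * -(μ / (1 - μ)) = -1 := by field_simp
  have hexp : -(1 / μ) * -(μ / (1 - μ)) = 1 / (1 - μ) := by field_simp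
  rw [Φ_rpow hK (Ico_subset_Icc_self hU), hexp_gap, hexp, Real.rpow_neg_one]
  field_simp

section RightInverse

variable {Usp : ℝ → ℝ}

theorem hasDerivAt_of_rightInvOn_Φ (hμ0 : 0 < μ) (hμ1 : μ < 1) (hK : 0 < K)
    (hmem : MapsTo Usp (Ioi 0) (Ioo 0 (UC γ μ))) (hinv : RightInvOn Usp (Φ γ μ K) (Ioi 0))
    {y : ℝ} (hy : 0 < y) : HasDerivAt Usp (g γ μ (Usp y) / y) y := by
  have hleft : LeftInvOn Usp (Φ γ μ K) (Ioo 0 (UC γ μ)) :=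
    (strictAntiOn_Φ hμ0 hμ1.le hK).injOn.rightInvOn_of_leftInvOn hinv (fun _ => Φ_pos hK) hmem
  have hderiv_ne : Φ γ μ K (Usp y) / g γ μ (Usp y) ≠ 0 :=
    div_ne_zero (Φ_pos hK (hmem hy)).ne' (g_neg hμ0 hμ1.le (hmem hy)).ne
  have hderiv := (hasStrictDerivAt_Φ hμ0 hμ1.le (hmem hy)).to_local_left_inverse hderiv_ne
    (eventually_of_mem (isOpen_Ioo.mem_nhds (hmem hy)) hleft)
  rw [inv_div, hinv hy] at hderiv
  exact hderiv.hasDerivAt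

theorem tendsto_atTop_of_rightInvOn_Φ (hμ0 : 0 < μ) (hμ1 : μ < 1) (hK : 0 < K)
    (hmem : MapsTo Usp (Ioi 0) (Ioo 0 (UC γ μ))) (hinv : RightInvOn Usp (Φ γ μ K) (Ioi 0)) :
    Tendsto Usp atTop (𝓝 0) := by
  have hUC : 0 < UC γ μ := nonempty_Ioo.1 ⟨_, hmem (mem_Ioi.2 one_pos)⟩
  refine tendsto_nhds_left_of_antitoneOn_Ioo (strictAntiOn_Φ hμ0 hμ1.le hK).antitoneOn hUC
    ((eventually_gt_atTop 0).mono hmem) fun c _ => ?_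
  filter_upwards [eventually_gt_atTop 0, eventually_gt_atTop (Φ γ μ K c)] with y hy hcy
  rwa [hinv hy]

theorem tendsto_nhdsGT_zero_of_rightInvOn_Φ (hμ0 : 0 < μ) (hμ1 : μ < 1) (hK : 0 < K)
    (hmem : MapsTo Usp (Ioi 0) (Ioo 0 (UC γ μ))) (hinv : RightInvOn Usp (Φ γ μ K) (Ioi 0)) :
    Tendsto Usp (𝓝[>] 0) (𝓝 (UC γ μ)) := by
  have hUC : 0 < UC γ μ := nonempty_Ioo.1 ⟨_, hmem (mem_Ioi.2 one_pos)⟩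
  refine tendsto_nhds_right_of_antitoneOn_Ioo (strictAntiOn_Φ hμ0 hμ1.le hK).antitoneOn hUC
    (eventually_mem_nhdsWithin.mono hmem) fun c hc => ?_
  filter_upwards [Ioo_mem_nhdsGT (Φ_pos hK hc)] with y hy
  rw [hinv hy.1]
  exact hy.2

theorem tendsto_rpow_mul_of_rightInvOn_Φ (hμ0 : 0 < μ) (hμ1 : μ < 1) (hK : 0 < K)
    (hmem : MapsTo Usp (Ioi 0) (Ioo 0 (UC γ μ))) (hinv : RightInvOn Usp (Φ γ μ K) (Ioi 0)) :
    Tendsto (fun y : ℝ => y ^ μ * Usp y) atTop (𝓝 (K ^ μ * UC γ μ ^ (1 - μ))) := by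
  have hgap : Tendsto (fun y => UC γ μ - Usp y) atTop (𝓝 (UC γ μ)) := by
    simpa only [sub_zero] using
      (tendsto_atTop_of_rightInvOn_Φ hμ0 hμ1 hK hmem hinv).const_sub (UC γ μ)
  refine ((hgap.rpow_const (Or.inr (sub_pos.2 hμ1).le)).const_mul (K ^ μ)).congr' ?_
  filter_upwards [eventually_gt_atTop 0] with y hy
  rw [← Φ_rpow_mul_self hμ0.ne' hK.le (Ioo_subset_Ioc_self (hmem hy)), hinv hy]

theorem tendsto_UC_sub_mul_rpow_of_rightInvOn_Φ (hμ0 : 0 < μ) (hμ1 : μ < 1) (hK : 0 < K)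
    (hmem : MapsTo Usp (Ioi 0) (Ioo 0 (UC γ μ))) (hinv : RightInvOn Usp (Φ γ μ K) (Ioi 0)) :
    Tendsto (fun y : ℝ => (UC γ μ - Usp y) * y ^ (-(μ / (1 - μ)))) (𝓝[>] 0)
      (𝓝 (UC γ μ ^ (1 / (1 - μ)) * K ^ (-(μ / (1 - μ))))) := by
  have hlim := tendsto_nhdsGT_zero_of_rightInvOn_Φ hμ0 hμ1 hK hmem hinv
  refine ((hlim.rpow_const (Or.inr (one_div_pos.2 (sub_pos.2 hμ1)).le)).mul_const _).congr' ?_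
  filter_upwards [self_mem_nhdsWithin] with y hy
  rw [← UC_sub_mul_Φ_rpow hμ0.ne' hμ1.ne hK.le (Ioo_subset_Ico_self (hmem hy)), hinv hy]

end RightInverse

theorem stmt5_general (γ μ K : ℝ) (hμ0 : 0 < μ) (hμ1 : μ < 1) (hK : 0 < K) (Usp : ℝ → ℝ)
    (hmem : ∀ y ∈ Ioi (0 : ℝ), Usp y ∈ Ioo (0 : ℝ) (UC γ μ))
    (hrinv : ∀ y ∈ Ioi (0 : ℝ), Φ γ μ K (Usp y) = y) :
    (∀ y ∈ Ioi (0 : ℝ), DifferentiableAt ℝ Usp y ∧ y * deriv Usp y = g γ μ (Usp y)) ∧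
    Tendsto (fun y : ℝ => y ^ μ * Usp y) atTop (𝓝 (K ^ μ * (UC γ μ) ^ (1 - μ))) ∧
    Tendsto (fun y : ℝ => (UC γ μ - Usp y) * y ^ (-(μ / (1 - μ)))) (𝓝[>] (0 : ℝ))
      (𝓝 ((UC γ μ) ^ (1 / (1 - μ)) * K ^ (-(μ / (1 - μ))))) := by
  refine ⟨fun y hy => ?_, tendsto_rpow_mul_of_rightInvOn_Φ hμ0 hμ1 hK hmem hrinv,
    tendsto_UC_sub_mul_rpow_of_rightInvOn_Φ hμ0 hμ1 hK hmem hrinv⟩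
  have hderiv := hasDerivAt_of_rightInvOn_Φ hμ0 hμ1 hK hmem hrinv hy
  refine ⟨hderiv.differentiableAt, ?_⟩
  rw [hderiv.deriv, mul_div_cancel₀ _ (ne_of_gt hy)]

/-- the inverse `U^sp` of `Φ` is differentiable, solves
`y (U^sp)'(y) = g(U^sp(y))` on `(0,∞)`, and has the stated asymptotics as
`y → ∞` and `y → 0⁺`. -/
theorem stmt5 (γ μ K : ℝ) (hγ1 : 1 < γ) (hγ3 : γ < 3) (hμ0 : 0 < μ) (hμ1 : μ < 1)
    (hK : 0 < K) (Usp : ℝ → ℝ)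
    (hmem : ∀ y ∈ Ioi (0 : ℝ), Usp y ∈ Ioo (0 : ℝ) (UC γ μ))
    (hrinv : ∀ y ∈ Ioi (0 : ℝ), Φ γ μ K (Usp y) = y)
    (hlinv : ∀ U ∈ Ioo (0 : ℝ) (UC γ μ), Usp (Φ γ μ K U) = U) :
    (∀ y ∈ Ioi (0 : ℝ), DifferentiableAt ℝ Usp y ∧ y * deriv Usp y = g γ μ (Usp y)) ∧
    Tendsto (fun y : ℝ => y ^ μ * Usp y) atTop (𝓝 (K ^ μ * (UC γ μ) ^ (1 - μ))) ∧
    Tendsto (fun y : ℝ => (UC γ μ - Usp y) * y ^ (-(μ / (1 - μ)))) (𝓝[>] (0 : ℝ))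
      (𝓝 ((UC γ μ) ^ (1 / (1 - μ)) * K ^ (-(μ / (1 - μ))))) :=
  stmt5_general γ μ K hμ0 hμ1 hK Usp hmem hrinv
end

section
/- With U_D = 2/(3−γ), C₁ = (γ−1)²/(3−γ) and C₂ = (γ−1)·(−(γ−3)²μ + γ²−2γ+5)/(2(3−γ)·((γ−3)μ+2)), the inequalities 2(U_D − 1) − C₁ > 0 and 2(U_D − 1) − C₂ > 0 hold; that is, both slope roots at the sonic point D are strictly less than 2(U_D − 1) = 2(γ−1)/(3−γ). -/
noncomputable def UD (γ : ℝ) : ℝ := 2 / (3 - γ)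
noncomputable def C₁D (γ : ℝ) : ℝ := (γ - 1) ^ 2 / (3 - γ)
noncomputable def C₂D (γ μ : ℝ) : ℝ :=
  (γ - 1) * (-(γ - 3) ^ 2 * μ + γ ^ 2 - 2 * γ + 5) / (2 * (3 - γ) * ((γ - 3) * μ + 2))

/-! In each gap `2(U_D - 1) - Cᵢ` the numerator is divisible by `3 - γ`. After cancellation what
is left is a product of factors whose signs are visible. -/

section

variable {γ μ : ℝ}

lemma two_mul_UD_sub_one (hγ : γ ≠ 3) : 2 * (UD γ - 1) = 2 * (γ - 1) / (3 - γ) := by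
  have hγ' : 3 - γ ≠ 0 := sub_ne_zero.2 hγ.symm
  rw [UD, div_sub_one hγ']
  ring

lemma two_mul_UD_sub_one_sub_C₁D (hγ : γ ≠ 3) : 2 * (UD γ - 1) - C₁D γ = γ - 1 := by
  have hγ' : 3 - γ ≠ 0 := sub_ne_zero.2 hγ.symm
  calc
    2 * (UD γ - 1) - C₁D γ = (γ - 1) * (3 - γ) / (3 - γ) := by
      rw [two_mul_UD_sub_one hγ, C₁D]
      ring
    _ = γ - 1 := mul_div_cancel_right₀ _ hγ'

lemma two_mul_UD_sub_one_sub_C₂D (hγ : γ ≠ 3) (hμ : (γ - 3) * μ + 2 ≠ 0) :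
    2 * (UD γ - 1) - C₂D γ μ = (γ ^ 2 - 1) / 2 * ((1 - μ) / ((γ - 3) * μ + 2)) := by
  have hγ' : 3 - γ ≠ 0 := sub_ne_zero.2 hγ.symm
  have h_factor : 4 * ((γ - 3) * μ + 2) - (-(γ - 3) ^ 2 * μ + γ ^ 2 - 2 * γ + 5) =
      (3 - γ) * (γ + 1) * (1 - μ) := by
    ring
  calc
    2 * (UD γ - 1) - C₂D γ μ
        = (γ - 1) * (4 * ((γ - 3) * μ + 2) - (-(γ - 3) ^ 2 * μ + γ ^ 2 - 2 * γ + 5)) /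
            (2 * (3 - γ) * ((γ - 3) * μ + 2)) := by
      rw [two_mul_UD_sub_one hγ, C₂D]
      field_simp
      ring
    _ = (γ ^ 2 - 1) / 2 * ((1 - μ) / ((γ - 3) * μ + 2)) := by
      rw [h_factor]
      field_simp
      ring

lemma sub_three_mul_add_two_pos (hγ1 : 1 < γ) (hγ3 : γ ≤ 3) (hμ : μ ≤ 1) :
    0 < (γ - 3) * μ + 2 := by
  calc
    0 < (γ - 1) + (3 - γ) * (1 - μ) :=
      add_pos_of_pos_of_nonneg (sub_pos.2 hγ1)
        (mul_nonneg (sub_nonneg.2 hγ3) (sub_nonneg.2 hμ))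
    _ = (γ - 3) * μ + 2 := by ring

theorem stmt10_general (hγ1 : 1 < γ) (hγ3 : γ ≠ 3)
    (hμ : 0 < (1 - μ) / ((γ - 3) * μ + 2)) :
    0 < 2 * (UD γ - 1) - C₁D γ ∧ 0 < 2 * (UD γ - 1) - C₂D γ μ ∧
    C₁D γ < 2 * (γ - 1) / (3 - γ) ∧ C₂D γ μ < 2 * (γ - 1) / (3 - γ) := by
  have h_denom : (γ - 3) * μ + 2 ≠ 0 := (div_ne_zero_iff.1 hμ.ne').2
  have h_sq : 0 < γ ^ 2 - 1 := sub_pos.2 (one_lt_pow₀ hγ1 two_ne_zero)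
  have hC₁ : 0 < 2 * (UD γ - 1) - C₁D γ := by
    rw [two_mul_UD_sub_one_sub_C₁D hγ3]
    exact sub_pos.2 hγ1
  have hC₂ : 0 < 2 * (UD γ - 1) - C₂D γ μ := by
    rw [two_mul_UD_sub_one_sub_C₂D hγ3 h_denom]
    exact mul_pos (half_pos h_sq) hμ
  rw [← two_mul_UD_sub_one hγ3]
  exact ⟨hC₁, hC₂, sub_pos.1 hC₁, sub_pos.1 hC₂⟩

end

/-- `2(U_D - 1) - C₁ > 0` and `2(U_D - 1) - C₂ > 0`, i.e. both slope roots
at the sonic point `D` are strictly less than `2(U_D - 1) = 2(γ-1)/(3-γ)`. -/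
theorem stmt10 (γ μ : ℝ) (hγ1 : 1 < γ) (hγ3 : γ < 3) (hμ0 : 0 < μ) (hμ1 : μ < 1) :
    0 < 2 * (UD γ - 1) - C₁D γ ∧ 0 < 2 * (UD γ - 1) - C₂D γ μ ∧
    C₁D γ < 2 * (γ - 1) / (3 - γ) ∧ C₂D γ μ < 2 * (γ - 1) / (3 - γ) :=
  stmt10_general hγ1 hγ3.ne
    (div_pos (sub_pos.2 hμ1) (sub_three_mul_add_two_pos hγ1 hγ3.le hμ1.le))
end

section
/- There exists a continuous function H : [1, U_D] → ℝ, differentiable on the open interval (1, U_D), such that: H(1) = 0; H(U_D) = H_D = ((γ−1)/(3−γ))²; for every U ∈ (1, U_D), H_G(U) < H(U) < ((γ−1)²/4)·U² (so the integral curve lies strictly between the lower barrier G = 0 and the upper barrier given by the special solution); H'(U)·G(H(U),U) = F(H(U),U) for every U ∈ (1, U_D); and lim_{U→1⁺} H(U)/(U−1) = γ(1−μ)/(1+k₂). In other words, there exists an integral curve of dH/dU = F/G connecting the point B = (1,0), which it leaves with slope γ(1−μ)/(1+k₂), to the point D = (U_D, H_D). -/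
open Set Filter Topology

noncomputable def k₁ (γ μ : ℝ) : ℝ := ((γ + 1) + μ * (3 - γ)) / 2
noncomputable def k₂ (γ μ : ℝ) : ℝ := 2 * (1 - μ) / (γ - 1)
noncomputable def F (γ μ H U : ℝ) : ℝ := 2 * H * (H - (U ^ 2 - k₁ γ μ * U + μ))
noncomputable def G (γ μ H U : ℝ) : ℝ := H * (U + k₂ γ μ) - U * (U - 1) * (U - μ)
noncomputable def HD (γ : ℝ) : ℝ := ((γ - 1) / (3 - γ)) ^ 2
/-- The curve `G = 0` solved for `H`. -/
noncomputable def HG (γ μ U : ℝ) : ℝ := U * (U - 1) * (U - μ) / (U + k₂ γ μ)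

/- Near `B = (1, 0)` the substitution `U = 1 + V`, `H = V w` turns `dH/dU = F/G` into the singular
equation `V w' = Φ(V, w)`, where the linearisation of `Φ` in `w` is negative at the limit slope. The
averages `V ↦ ∫₀¹ σᵐ g(σV) dσ` select the solution that stays bounded at `V = 0` as the fixed point
of a contraction, and this is an integral curve leaving `B` with the prescribed slope.

The curve is then continued to `U_D` between two barriers. From above it cannot cross the special
solution `((γ-1)²/4) U²`, by uniqueness. From below it cannot cross the curve
`G = η (U - 1) (U_D - U)` for small `η > 0`: as `F` is bounded below by a positive multiple of
`(U - 1) (U_D - U)` there, the slope `F/G` is of order `1/η` and exceeds that of the curve. In this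
way `G` stays positive along the solution. At `D` the special solution meets `G = 0`, which forces
the curve to end there. -/

open scoped NNReal

section SingularODE

variable {E : Type*} [NormedAddCommGroup E] [NormedSpace ℝ E]

/-- The weighted mean `∫₀¹ σᵐ g(σV) dσ`. It is the solution of `V y' = g - (m + 1) y` that stays
bounded at `V = 0`; the weight is a natural power so that negative `V` are allowed. -/
noncomputable def powMean (m : ℕ) (g : ℝ → E) (V : ℝ) : E :=
  ∫ σ in (0 : ℝ)..1, σ ^ m • g (σ * V)

variable {m : ℕ} {f g : ℝ → E}

theorem powMean_zero (m : ℕ) (g : ℝ → E) [CompleteSpace E] :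
    powMean m g 0 = ((m : ℝ) + 1)⁻¹ • g 0 := by
  simp only [powMean, mul_zero, intervalIntegral.integral_smul_const, integral_pow]
  simp

theorem continuous_powMean (hg : Continuous g) : Continuous (powMean m g) :=
  intervalIntegral.continuous_parametric_intervalIntegral_of_continuous'
    (f := fun V σ => σ ^ m • g (σ * V)) (by fun_prop) 0 1

theorem powMean_sub (hf : Continuous f) (hg : Continuous g) (V : ℝ) :
    powMean m (f - g) V = powMean m f V - powMean m g V := by
  simp only [powMean, Pi.sub_apply, smul_sub]
  exact intervalIntegral.integral_sub (Continuous.intervalIntegrable (by fun_prop) _ _)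
    (Continuous.intervalIntegrable (by fun_prop) _ _)

theorem norm_powMean_le {C : ℝ} (hC : ∀ V, ‖g V‖ ≤ C) (V : ℝ) :
    ‖powMean m g V‖ ≤ C / (m + 1) := by
  calc ‖powMean m g V‖ ≤ ∫ σ in (0 : ℝ)..1, σ ^ m * C := by
        refine intervalIntegral.norm_integral_le_of_norm_le zero_le_one
          (Eventually.of_forall fun σ hσ => ?_) (Continuous.intervalIntegrable (by fun_prop) _ _)
        have hσm : 0 ≤ σ ^ m := pow_nonneg hσ.1.le m
        rw [norm_smul, Real.norm_of_nonneg hσm]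
        exact mul_le_mul_of_nonneg_left (hC _) hσm
    _ = C / (m + 1) := by
        rw [intervalIntegral.integral_mul_const, integral_pow]
        simp [div_eq_inv_mul]

theorem pow_smul_powMean (m : ℕ) (g : ℝ → E) (V : ℝ) :
    V ^ (m + 1) • powMean m g V = ∫ τ in (0 : ℝ)..V, τ ^ m • g τ := by
  have scale : ∀ σ : ℝ, V ^ m • σ ^ m • g (σ * V) = (σ * V) ^ m • g (σ * V) := fun σ => by
    rw [smul_smul, mul_pow, mul_comm]
  rw [pow_succ', mul_smul, powMean, ← intervalIntegral.integral_smul]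
  simp only [scale]
  simpa using intervalIntegral.smul_integral_comp_mul_right (a := 0) (b := 1)
    (fun τ => τ ^ m • g τ) V

variable [CompleteSpace E]

theorem hasDerivAt_powMean (hg : Continuous g) {V : ℝ} (hV : V ≠ 0) :
    HasDerivAt (powMean m g) (V⁻¹ • (g V - ((m : ℝ) + 1) • powMean m g V)) V := by
  have hint : HasDerivAt (fun v => ∫ τ in (0 : ℝ)..v, τ ^ m • g τ) (V ^ m • g V) V :=
    (by fun_prop : Continuous fun τ => τ ^ m • g τ).integral_hasStrictDerivAt 0 V |>.hasDerivAt
  have hpow : HasDerivAt (fun v : ℝ => (v ^ (m + 1))⁻¹)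
      (-(((m + 1 : ℕ) : ℝ) * V ^ m) / (V ^ (m + 1)) ^ 2) V :=
    (hasDerivAt_pow (m + 1) V).fun_inv (pow_ne_zero _ hV)
  have hrep : powMean m g =ᶠ[𝓝 V]
      fun v => (v ^ (m + 1))⁻¹ • ∫ τ in (0 : ℝ)..v, τ ^ m • g τ := by
    filter_upwards [isOpen_ne.mem_nhds hV] with v hv
    rw [← pow_smul_powMean, inv_smul_smul₀ (pow_ne_zero _ hv)]
  refine ((hpow.smul hint).congr_of_eventuallyEq hrep).congr_deriv ?_
  rw [← pow_smul_powMean, smul_sub, smul_smul, smul_smul, smul_smul, sub_eq_add_neg, ← neg_smul]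
  congr 2 <;> push_cast <;> field_simp <;> ring

theorem exists_eq_powMean {Ψ : ℝ → E → E} (hΨ : Continuous (Function.uncurry Ψ)) {q : ℝ≥0}
    (hq : (q : ℝ) < m + 1) (hlip : ∀ V, LipschitzWith q (Ψ V)) {C : ℝ}
    (hC : ∀ V x, ‖Ψ V x‖ ≤ C) :
    ∃ w : ℝ → E, Continuous w ∧ ∀ V, w V = powMean m (fun τ => Ψ τ (w τ)) V := by
  have hcont : ∀ w : BoundedContinuousFunction ℝ E, Continuous fun τ => Ψ τ (w τ) := fun w =>
    hΨ.comp (continuous_id.prodMk w.continuous)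
  let T : BoundedContinuousFunction ℝ E → BoundedContinuousFunction ℝ E := fun w =>
    .ofNormedAddCommGroup (powMean m fun τ => Ψ τ (w τ)) (continuous_powMean (hcont w))
      (C / (m + 1)) (norm_powMean_le fun τ => hC τ (w τ))
  have hT : ContractingWith (q / (m + 1)) T := by
    refine ⟨(div_lt_one (by positivity)).2 (by exact_mod_cast hq),
      LipschitzWith.of_dist_le_mul fun u v => ?_⟩
    refine (BoundedContinuousFunction.dist_le (by positivity)).2 fun V => ?_
    have hpt : ∀ τ, ‖((fun τ => Ψ τ (u τ)) - fun τ => Ψ τ (v τ)) τ‖ ≤ q * dist u v := fun τ => by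
      rw [Pi.sub_apply, ← dist_eq_norm]
      exact ((hlip τ).dist_le_mul _ _).trans
        (mul_le_mul_of_nonneg_left (u.dist_coe_le_dist τ) q.2)
    calc dist (T u V) (T v V)
        = ‖powMean m ((fun τ => Ψ τ (u τ)) - fun τ => Ψ τ (v τ)) V‖ := by
          rw [powMean_sub (hcont u) (hcont v), ← dist_eq_norm]; rfl
      _ ≤ q * dist u v / (m + 1) := norm_powMean_le hpt V
      _ = (q / (m + 1) : ℝ≥0) * dist u v := by push_cast; ring
  refine ⟨hT.fixedPoint, hT.fixedPoint.continuous, fun V => ?_⟩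
  exact (DFunLike.congr_fun hT.fixedPoint_isFixedPt V).symm

theorem exists_hasDerivAt_inv_smul_sub {Ψ : ℝ → E → E} (hΨ : Continuous (Function.uncurry Ψ))
    {q : ℝ≥0} (hq : (q : ℝ) < m + 1) (hlip : ∀ V, LipschitzWith q (Ψ V)) {C : ℝ}
    (hC : ∀ V x, ‖Ψ V x‖ ≤ C) :
    ∃ w : ℝ → E, Continuous w ∧ (∀ V, ‖w V‖ ≤ C / (m + 1)) ∧
      ((m : ℝ) + 1) • w 0 = Ψ 0 (w 0) ∧
      ∀ V ≠ 0, HasDerivAt w (V⁻¹ • (Ψ V (w V) - ((m : ℝ) + 1) • w V)) V := by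
  obtain ⟨w, hw, hfix⟩ := exists_eq_powMean hΨ hq hlip hC
  have hcont : Continuous fun τ => Ψ τ (w τ) := hΨ.comp (continuous_id.prodMk hw)
  refine ⟨w, hw, fun V => ?_, ?_, fun V hV => ?_⟩
  · exact hfix V ▸ norm_powMean_le (fun τ => hC τ (w τ)) V
  · have h0 := hfix 0
    rw [powMean_zero] at h0
    exact (eq_inv_smul_iff₀ (by positivity)).1 h0
  · have hderiv := hasDerivAt_powMean (m := m) hcont hV
    rwa [← hfix V, ← funext hfix] at hderiv

theorem abs_add_mul_sub_le {φ : ℝ → ℝ} {a n q : ℝ} (han : a ≤ n) {x y : ℝ}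
    (hφ : |φ x - φ y + a * (x - y)| ≤ q * |x - y|) :
    |φ x + n * x - (φ y + n * y)| ≤ (n - a + q) * |x - y| :=
  calc |φ x + n * x - (φ y + n * y)|
      = |φ x - φ y + a * (x - y) + (n - a) * (x - y)| := by ring_nf
    _ ≤ q * |x - y| + (n - a) * |x - y| := by
        refine (abs_add_le _ _).trans (add_le_add hφ ?_)
        rw [abs_mul, abs_of_nonneg (sub_nonneg.2 han)]
    _ = (n - a + q) * |x - y| := by ring

theorem abs_add_mul_le {φ : ℝ → ℝ} {a n q r : ℝ} (hq : 0 ≤ q) (han : a ≤ n) {x : ℝ} (hx : |x| ≤ r)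
    (hφ : |φ x - φ 0 + a * x| ≤ q * |x|) (hφ0 : |φ 0| ≤ (a - q) * r) :
    |φ x + n * x| ≤ n * r := by
  have hdiff : |φ x + n * x - φ 0| ≤ (n - a + q) * r := by
    simpa using (abs_add_mul_sub_le (y := 0) han (by simpa using hφ)).trans
      (mul_le_mul_of_nonneg_left (by simpa using hx) (by linarith : 0 ≤ n - a + q))
  have htri := abs_add_le (φ x + n * x - φ 0) (φ 0)
  rw [sub_add_cancel] at htri
  linarith

/- Adding `(m + 1) x` to `Φ V x`, with `a ≤ m + 1`, leaves a field whose Lipschitz constant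
`m + 1 - a + q` is smaller than the `m + 1` gained by `powMean`. -/
theorem exists_hasDerivAt_div_of_abs_sub_le {Φ : ℝ → ℝ → ℝ} {a q r δ : ℝ} (hq : 0 ≤ q)
    (hqa : q < a) (hr : 0 ≤ r) (hδ : 0 ≤ δ)
    (hΦ : ContinuousOn (Function.uncurry Φ) (Icc (-δ) δ ×ˢ Icc (-r) r))
    (hmono : ∀ V ∈ Icc (-δ) δ, ∀ x ∈ Icc (-r) r, ∀ y ∈ Icc (-r) r,
      |Φ V x - Φ V y + a * (x - y)| ≤ q * |x - y|)
    (hsmall : ∀ V ∈ Icc (-δ) δ, |Φ V 0| ≤ (a - q) * r) (h0 : Φ 0 0 = 0) :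
    ∃ w : ℝ → ℝ, Continuous w ∧ w 0 = 0 ∧
      ∀ V ∈ Icc (-δ) δ, V ≠ 0 → HasDerivAt w (Φ V (w V) / V) V := by
  obtain ⟨m, hm⟩ : ∃ m : ℕ, a ≤ m + 1 :=
    (exists_nat_ge a).imp fun m hm => hm.trans (le_add_of_nonneg_right zero_le_one)
  let clamp : ℝ → ℝ → ℝ := fun b x => max (-b) (min x b)
  have hclamp : ∀ {b : ℝ}, 0 ≤ b → ∀ x, clamp b x ∈ Icc (-b) b := fun hb x =>
    ⟨le_max_left _ _, max_le (neg_le_self hb) (min_le_right _ _)⟩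
  have hclamp_eq : ∀ {b x : ℝ}, x ∈ Icc (-b) b → clamp b x = x := fun hx => by
    simp only [clamp, min_eq_left hx.2, max_eq_right hx.1]
  have hclamp_lip : LipschitzWith 1 (clamp r) := (LipschitzWith.id.min_const r).const_max (-r)
  let Ψ : ℝ → ℝ → ℝ := fun V x => Φ (clamp δ V) (clamp r x) + (m + 1) * clamp r x
  have hΨ : Continuous (Function.uncurry Ψ) :=
    (hΦ.comp_continuous (f := fun p : ℝ × ℝ => (clamp δ p.1, clamp r p.2)) (by fun_prop)
      fun p => ⟨hclamp hδ _, hclamp hr _⟩).add (by fun_prop)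
  have hlip : ∀ V, LipschitzWith (Real.toNNReal (m + 1 - a + q)) (Ψ V) := fun V =>
    LipschitzWith.of_dist_le' fun x y => (abs_add_mul_sub_le hm
      (hmono _ (hclamp hδ V) _ (hclamp hr x) _ (hclamp hr y))).trans
      (mul_le_mul_of_nonneg_left (by simpa [Real.dist_eq] using hclamp_lip.dist_le_mul x y)
        (by linarith))
  have h0r : (0 : ℝ) ∈ Icc (-r) r := ⟨neg_nonpos.2 hr, hr⟩
  have h0δ : (0 : ℝ) ∈ Icc (-δ) δ := ⟨neg_nonpos.2 hδ, hδ⟩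
  have hbound : ∀ V x, ‖Ψ V x‖ ≤ (m + 1) * r := fun V x =>
    abs_add_mul_le hq hm (abs_le.2 (hclamp hr x))
      (by simpa using hmono _ (hclamp hδ V) _ (hclamp hr x) 0 h0r) (hsmall _ (hclamp hδ V))
  obtain ⟨w, hw, hwr, hw0, hwd⟩ := exists_hasDerivAt_inv_smul_sub hΨ
    (by rw [Real.coe_toNNReal _ (by linarith)]; linarith) hlip hbound
  simp only [mul_div_cancel_left₀ r (by positivity : (m : ℝ) + 1 ≠ 0)] at hwr
  have hΨw : ∀ V ∈ Icc (-δ) δ, Ψ V (w V) - (m + 1) * w V = Φ V (w V) := fun V hV => by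
    simp only [Ψ, hclamp_eq hV, hclamp_eq (abs_le.1 (hwr V)), add_sub_cancel_right]
  refine ⟨w, hw, ?_, fun V hV hV0 => ?_⟩
  · have hΦw : Φ 0 (w 0) = 0 := by rw [← hΨw 0 h0δ, ← smul_eq_mul, hw0, sub_self]
    have hle := hmono 0 h0δ (w 0) (abs_le.1 (hwr 0)) 0 h0r
    rw [hΦw, h0, sub_zero, zero_add, sub_zero, abs_mul, abs_of_pos (hq.trans_lt hqa)] at hle
    exact abs_nonpos_iff.1 (by nlinarith [abs_nonneg (w 0)])
  · simpa only [smul_eq_mul, hΨw V hV, inv_mul_eq_div] using hwd V hV0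

theorem exists_abs_sub_sub_mul_le {Φ : ℝ → ℝ → ℝ} {V₀ s b c : ℝ}
    (hΦ : ContDiffAt ℝ 1 (Function.uncurry Φ) (V₀, s)) (hderiv : HasDerivAt (Φ V₀) b s)
    (hc : 0 < c) :
    ∃ ε > 0, ∀ V x y, |V - V₀| < ε → |x - s| < ε → |y - s| < ε →
      |Φ V x - Φ V y - b * (x - y)| ≤ c * |x - y| := by
  have hstrict := hΦ.hasStrictFDerivAt one_ne_zero
  have hpartial : ∀ x, fderiv ℝ (Function.uncurry Φ) (V₀, s) (0, x) = b * x := fun x => by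
    have hcomp := hstrict.hasFDerivAt.comp_hasDerivAt s
      ((hasDerivAt_const s V₀).prodMk (hasDerivAt_id s))
    have hx : ((0 : ℝ), x) = x • ((0 : ℝ), (1 : ℝ)) := by simp
    rw [hx, map_smul, hcomp.unique hderiv, smul_eq_mul, mul_comm]
  obtain ⟨ε, hε, hlin⟩ := Metric.eventually_nhds_iff.1 (hstrict.isLittleO.def hc)
  refine ⟨ε, hε, fun V x y hV hx hy => ?_⟩
  have hxy := @hlin ((V, x), (V, y)) (max_lt (max_lt hV hx) (max_lt hV hy))
  simpa [hpartial, Prod.norm_def] using hxy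

theorem exists_hasDerivAt_div_of_contDiffAt {Φ : ℝ → ℝ → ℝ} {s a : ℝ}
    (hΦ : ContDiffAt ℝ 1 (Function.uncurry Φ) (0, s)) (h0 : Φ 0 s = 0)
    (hderiv : HasDerivAt (Φ 0) (-a) s) (ha : 0 < a) :
    ∃ w : ℝ → ℝ, Continuous w ∧ w 0 = s ∧ ∀ᶠ V in 𝓝[≠] 0, HasDerivAt w (Φ V (w V) / V) V := by
  obtain ⟨ε, hε, hlin⟩ := exists_abs_sub_sub_mul_le hΦ hderiv (half_pos ha)
  obtain ⟨ε', hε', hcont⟩ := Metric.eventually_nhds_iff.1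
    ((hΦ.eventually (by simp)).mono fun _ hp => hp.continuousAt)
  obtain ⟨r, hr, hrε⟩ := exists_between (lt_min hε hε')
  have hslice : ContinuousAt (fun V => Φ V s) 0 :=
    ContinuousAt.comp (f := fun V : ℝ => (V, s)) hΦ.continuousAt (by fun_prop)
  obtain ⟨ε'', hε'', hsmall⟩ := Metric.continuousAt_iff.1 hslice (a / 2 * r) (by positivity)
  obtain ⟨δ, hδ, hδr⟩ := exists_between (lt_min hr hε'')
  have hV_lt : ∀ {V}, V ∈ Icc (-δ) δ → |V| < min r ε'' := fun hV => (abs_le.2 hV).trans_lt hδr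
  have hV_lt' : ∀ {V}, V ∈ Icc (-δ) δ → |V| < min ε ε' := fun hV =>
    ((hV_lt hV).trans_le (min_le_left _ _)).trans hrε
  have hx_lt : ∀ {x}, x ∈ Icc (-r) r → |s + x - s| < min ε ε' := fun hx => by
    rw [add_sub_cancel_left]; exact (abs_le.2 hx).trans_lt hrε
  obtain ⟨w, hw, hw0, hwd⟩ := exists_hasDerivAt_div_of_abs_sub_le (Φ := fun V x => Φ V (s + x))
    (half_pos ha).le (half_lt_self ha) hr.le hδ.le
    (fun p hp => by
      have hp' : ContinuousAt (Function.uncurry Φ) (p.1, s + p.2) := hcont <| max_lt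
        (by simpa using (hV_lt' hp.1).trans_le (min_le_right _ _))
        ((hx_lt hp.2).trans_le (min_le_right _ _))
      exact (ContinuousAt.comp (f := fun p : ℝ × ℝ => (p.1, s + p.2)) hp'
        (by fun_prop)).continuousWithinAt)
    (fun V hV x hx y hy => by
      simpa using hlin V (s + x) (s + y) (by simpa using (hV_lt' hV).trans_le (min_le_left _ _))
        ((hx_lt hx).trans_le (min_le_left _ _)) ((hx_lt hy).trans_le (min_le_left _ _)))
    (fun V hV => by
      have hV' : dist (Φ V s) (Φ 0 s) < a / 2 * r :=
        hsmall (by simpa using (hV_lt hV).trans_le (min_le_right _ _))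
      rw [h0, Real.dist_eq, sub_zero] at hV'
      simpa [sub_half] using hV'.le)
    (by simpa using h0)
  refine ⟨fun V => s + w V, by fun_prop, by simp [hw0], ?_⟩
  filter_upwards [self_mem_nhdsWithin,
    nhdsWithin_le_nhds (Icc_mem_nhds (neg_lt_zero.2 hδ) hδ)] with V hV0 hV
  exact (hwd V hV hV0).const_add s

end SingularODE

section IntegralCurves

variable {E : Type*} [NormedAddCommGroup E] {v : ℝ → E → E} {I : Set ℝ} {α β t₀ : ℝ}

/-- The hypotheses of the global Cauchy–Lipschitz theorem on the time set `I`: the field is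
defined on the whole space, and is Lipschitz and bounded there, uniformly for `t` in a compact
subset of `I`. -/
structure CauchyLipschitzOn (v : ℝ → E → E) (I : Set ℝ) : Prop where
  exists_lipschitzWith : ∀ J ⊆ I, IsCompact J → ∃ K : ℝ≥0, ∀ t ∈ J, LipschitzWith K (v t)
  exists_norm_le : ∀ J ⊆ I, IsCompact J → ∃ C : ℝ, ∀ t ∈ J, ∀ x, ‖v t x‖ ≤ C
  continuousOn : ∀ x, ContinuousOn (v · x) I

theorem CauchyLipschitzOn.mono {I' : Set ℝ} (hv : CauchyLipschitzOn v I) (h : I' ⊆ I) :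
    CauchyLipschitzOn v I' where
  exists_lipschitzWith J hJ := hv.exists_lipschitzWith J (hJ.trans h)
  exists_norm_le J hJ := hv.exists_norm_le J (hJ.trans h)
  continuousOn x := (hv.continuousOn x).mono h

variable [NormedSpace ℝ E]

theorem CauchyLipschitzOn.eqOn_Ioo (hv : CauchyLipschitzOn v (Ioo α β)) {f g : ℝ → E}
    (hf : IsIntegralCurveOn f v (Ioo α β)) (hg : IsIntegralCurveOn g v (Ioo α β))
    (ht₀ : t₀ ∈ Ioo α β) (heq : f t₀ = g t₀) : EqOn f g (Ioo α β) := fun t ht => by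
  obtain ⟨a, haα, ha⟩ := exists_between (lt_min ht.1 ht₀.1)
  obtain ⟨b, hb, hbβ⟩ := exists_between (max_lt ht.2 ht₀.2)
  obtain ⟨hat, hat₀⟩ := lt_min_iff.1 ha
  obtain ⟨htb, ht₀b⟩ := max_lt_iff.1 hb
  have hsub : Icc a b ⊆ Ioo α β := Icc_subset_Ioo haα hbβ
  obtain ⟨K, hK⟩ := hv.exists_lipschitzWith _ hsub isCompact_Icc
  have hderiv : ∀ {f : ℝ → E}, IsIntegralCurveOn f v (Ioo α β) → ∀ s ∈ Ioo a b,
      HasDerivAt f (v s (f s)) s ∧ f s ∈ univ := fun hf s hs =>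
    ⟨(hf.isIntegralCurveAt (isOpen_Ioo.mem_nhds (hsub (Ioo_subset_Icc_self hs)))).hasDerivAt,
      mem_univ _⟩
  exact ODE_solution_unique_of_mem_Ioo
    (fun s hs => (hK s (Ioo_subset_Icc_self hs)).lipschitzOnWith (s := univ)) ⟨hat₀, ht₀b⟩
    (hderiv hf) (hderiv hg) heq ⟨hat, htb⟩

theorem CauchyLipschitzOn.exists_isIntegralCurveOn_Icc [CompleteSpace E] {a b : ℝ}
    (hv : CauchyLipschitzOn v (Icc a b)) (ht₀ : t₀ ∈ Icc a b) (x₀ : E) :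
    ∃ f : ℝ → E, f t₀ = x₀ ∧ IsIntegralCurveOn f v (Icc a b) := by
  obtain ⟨K, hK⟩ := hv.exists_lipschitzWith _ Subset.rfl isCompact_Icc
  obtain ⟨C, hC⟩ := hv.exists_norm_le _ Subset.rfl isCompact_Icc
  have hpl : IsPicardLindelof v ⟨t₀, ht₀⟩ x₀
      (C.toNNReal * (max (b - t₀) (t₀ - a)).toNNReal) 0 C.toNNReal K :=
    { lipschitzOnWith := fun t ht => (hK t ht).lipschitzOnWith
      continuousOn := fun x _ => hv.continuousOn x
      norm_le := fun t ht x _ => (hC t ht x).trans (Real.le_coe_toNNReal C)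
      mul_max_le := by
        have hmax : 0 ≤ max (b - t₀) (t₀ - a) := (sub_nonneg.2 ht₀.2).trans (le_max_left _ _)
        simp [Real.coe_toNNReal _ hmax] }
  exact hpl.exists_eq_forall_mem_Icc_hasDerivWithinAt₀

theorem CauchyLipschitzOn.exists_isIntegralCurveOn_Ioo [CompleteSpace E]
    (hv : CauchyLipschitzOn v (Ioo α β)) (ht₀ : t₀ ∈ Ioo α β) (x₀ : E) :
    ∃ f : ℝ → E, f t₀ = x₀ ∧ IsIntegralCurveOn f v (Ioo α β) := by
  let a : ℝ → ℝ := fun t => (α + min t t₀) / 2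
  let b : ℝ → ℝ := fun t => (max t t₀ + β) / 2
  have ht₀ab : ∀ t ∈ Ioo α β, t₀ ∈ Ioo (a t) (b t) := by grind
  have htab : ∀ t ∈ Ioo α β, t ∈ Ioo (a t) (b t) := by grind
  have hsub : ∀ t ∈ Ioo α β, Icc (a t) (b t) ⊆ Ioo α β := by grind
  have hex : ∀ t ∈ Ioo α β, ∃ f : ℝ → E, f t₀ = x₀ ∧ IsIntegralCurveOn f v (Icc (a t) (b t)) :=
    fun t ht => (hv.mono (hsub t ht)).exists_isIntegralCurveOn_Icc
      (Ioo_subset_Icc_self (ht₀ab t ht)) x₀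
  choose! f hf₀ hf using hex
  have hcoh : ∀ t ∈ Ioo α β, EqOn (fun s => f s s) (f t) (Ioo (a t) (b t)) := fun t ht s hs => by
    have hsαβ : s ∈ Ioo α β := hsub t ht (Ioo_subset_Icc_self hs)
    have hsub_s : Ioo (max (a s) (a t)) (min (b s) (b t)) ⊆ Icc (a s) (b s) := by grind
    have hsub_t : Ioo (max (a s) (a t)) (min (b s) (b t)) ⊆ Icc (a t) (b t) := by grind
    exact (hv.mono (hsub_t.trans (hsub t ht))).eqOn_Ioo ((hf s hsαβ).mono hsub_s)
      ((hf t ht).mono hsub_t) (t₀ := t₀) (by grind) ((hf₀ s hsαβ).trans (hf₀ t ht).symm) (by grind)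
  refine ⟨fun t => f t t, hf₀ t₀ ht₀, fun t ht => ?_⟩
  have hnhds : Ioo (a t) (b t) ∈ 𝓝 t := isOpen_Ioo.mem_nhds (htab t ht)
  have hcurve : IsIntegralCurveOn (f t) v (Ioo (a t) (b t)) := (hf t ht).mono Ioo_subset_Icc_self
  exact ((hcurve.isIntegralCurveAt hnhds).hasDerivAt.congr_of_eventuallyEq
    ((hcoh t ht).eventuallyEq_of_mem hnhds)).hasDerivWithinAt

theorem CauchyLipschitzOn.lt_of_lt {v : ℝ → ℝ → ℝ} (hv : CauchyLipschitzOn v (Ioo α β))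
    {f g : ℝ → ℝ} (hf : IsIntegralCurveOn f v (Ioo α β)) (hg : IsIntegralCurveOn g v (Ioo α β))
    (ht₀ : t₀ ∈ Ioo α β) (hlt : f t₀ < g t₀) : ∀ t ∈ Ioo α β, f t < g t := by
  by_contra! ⟨t, ht, hle⟩
  obtain ⟨s, hs, heq⟩ := isPreconnected_Ioo.intermediate_value₂ ht₀ ht hf.continuousOn
    hg.continuousOn hlt.le hle
  exact hlt.ne (hv.eqOn_Ioo hf hg hs heq ht₀)

end IntegralCurves

section Barriers

variable {v : ℝ → ℝ → ℝ} {ℓ u : ℝ → ℝ} {I : Set ℝ} {α β t₀ : ℝ}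

/-- The field `v` with its space variable truncated to `[ℓ t, u t]`. It is globally defined and
agrees with `v` between the barriers `ℓ` and `u`. -/
def clampField (v : ℝ → ℝ → ℝ) (ℓ u : ℝ → ℝ) (t x : ℝ) : ℝ :=
  v t (max (ℓ t) (min x (u t)))

theorem clampField_of_mem {t x : ℝ} (hx : x ∈ Icc (ℓ t) (u t)) : clampField v ℓ u t x = v t x := by
  rw [clampField, min_eq_left hx.2, max_eq_right hx.1]

theorem isIntegralCurveOn_clampField_iff {f : ℝ → ℝ} (hf : ∀ t ∈ I, f t ∈ Icc (ℓ t) (u t)) :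
    IsIntegralCurveOn f (clampField v ℓ u) I ↔ IsIntegralCurveOn f v I :=
  forall₂_congr fun t ht => by rw [clampField_of_mem (hf t ht)]

theorem isCompact_setOf_mem_Icc {J : Set ℝ} (hJ : IsCompact J) (hℓ : ContinuousOn ℓ J)
    (hu : ContinuousOn u J) (hℓu : ∀ t ∈ J, ℓ t ≤ u t) :
    IsCompact {p : ℝ × ℝ | p.1 ∈ J ∧ p.2 ∈ Icc (ℓ p.1) (u p.1)} := by
  have himage : {p : ℝ × ℝ | p.1 ∈ J ∧ p.2 ∈ Icc (ℓ p.1) (u p.1)} =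
      (fun p : ℝ × ℝ => (p.1, AffineMap.lineMap (ℓ p.1) (u p.1) p.2)) '' (J ×ˢ Icc 0 1) := by
    ext ⟨t, x⟩
    constructor
    · rintro ⟨ht, hx⟩
      rw [← segment_eq_Icc (hℓu t ht), segment_eq_image_lineMap] at hx
      obtain ⟨θ, hθ, rfl⟩ := hx
      exact ⟨(t, θ), ⟨ht, hθ⟩, rfl⟩
    · rintro ⟨⟨t', θ⟩, ⟨ht, hθ⟩, heq⟩
      obtain ⟨rfl, rfl⟩ := Prod.mk.inj heq
      refine ⟨ht, ?_⟩
      rw [← segment_eq_Icc (hℓu t' ht), segment_eq_image_lineMap]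
      exact mem_image_of_mem _ hθ
  rw [himage]
  have hfst : ∀ {w : ℝ → ℝ}, ContinuousOn w J →
      ContinuousOn (fun p : ℝ × ℝ => w p.1) (J ×ˢ Icc 0 1) := fun hw =>
    hw.comp continuousOn_fst fun _ hp => hp.1
  refine (hJ.prod isCompact_Icc).image_of_continuousOn (continuousOn_fst.prodMk ?_)
  simp only [AffineMap.lineMap_apply, vsub_eq_sub, smul_eq_mul, vadd_eq_add]
  exact (continuousOn_snd.mul ((hfst hu).sub (hfst hℓ))).add (hfst hℓ)

theorem cauchyLipschitzOn_clampField (hℓ : ContinuousOn ℓ I) (hu : ContinuousOn u I)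
    (hℓu : ∀ t ∈ I, ℓ t ≤ u t)
    (hv : ∀ t ∈ I, ∀ x ∈ Icc (ℓ t) (u t), ContDiffAt ℝ 1 (Function.uncurry v) (t, x)) :
    CauchyLipschitzOn (clampField v ℓ u) I := by
  have hmem : ∀ t ∈ I, ∀ x, max (ℓ t) (min x (u t)) ∈ Icc (ℓ t) (u t) := fun t ht x =>
    ⟨le_max_left _ _, max_le (hℓu t ht) (min_le_right _ _)⟩
  have hcompact : ∀ J ⊆ I, IsCompact J →
      IsCompact {p : ℝ × ℝ | p.1 ∈ J ∧ p.2 ∈ Icc (ℓ p.1) (u p.1)} := fun J hJI hJ =>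
    isCompact_setOf_mem_Icc hJ (hℓ.mono hJI) (hu.mono hJI) fun t ht => hℓu t (hJI ht)
  refine ⟨fun J hJI hJ => ?_, fun J hJI hJ => ?_, fun x t ht => ?_⟩
  · have hloc : LocallyLipschitzOn {p : ℝ × ℝ | p.1 ∈ J ∧ p.2 ∈ Icc (ℓ p.1) (u p.1)}
        (Function.uncurry v) := fun p hp => by
      obtain ⟨K, s, hs, hK⟩ := (hv p.1 (hJI hp.1) p.2 hp.2).exists_lipschitzOnWith
      exact ⟨K, s, mem_nhdsWithin_of_mem_nhds hs, hK⟩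
    obtain ⟨K, hK⟩ := hloc.exists_lipschitzOnWith_of_compact (hcompact J hJI hJ)
    refine ⟨K, fun t ht => LipschitzWith.of_dist_le_mul fun x y => ?_⟩
    have hclamp : LipschitzWith 1 fun x => max (ℓ t) (min x (u t)) :=
      (LipschitzWith.id.min_const (u t)).const_max (ℓ t)
    calc dist (clampField v ℓ u t x) (clampField v ℓ u t y)
        ≤ K * dist (t, max (ℓ t) (min x (u t))) (t, max (ℓ t) (min y (u t))) :=
          hK.dist_le_mul (t, _) ⟨ht, hmem t (hJI ht) x⟩ (t, _) ⟨ht, hmem t (hJI ht) y⟩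
      _ ≤ K * dist x y := by
          gcongr
          simpa [Prod.dist_eq] using hclamp.dist_le_mul x y
  · obtain ⟨C, hC⟩ := (hcompact J hJI hJ).exists_bound_of_continuousOn (f := Function.uncurry v)
      fun p hp => (hv p.1 (hJI hp.1) p.2 hp.2).continuousAt.continuousWithinAt
    exact ⟨C, fun t ht x => hC (t, _) ⟨ht, hmem t (hJI ht) x⟩⟩
  · exact (hv t ht _ (hmem t ht x)).continuousAt.comp_continuousWithinAt
      (f := fun t => (t, max (ℓ t) (min x (u t))))
      (continuousWithinAt_id.prodMk ((hℓ t ht).max (continuousWithinAt_const.min (hu t ht))))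

theorem le_of_strict_subsolution {h ℓ' : ℝ → ℝ} {a b : ℝ}
    (hℓ : ∀ t ∈ Ico a b, HasDerivAt ℓ (ℓ' t) t) (hsub : ∀ t ∈ Ico a b, ℓ' t < v t (ℓ t))
    (hh : ∀ t ∈ Ico a b, HasDerivAt h (v t (h t)) t) (ha : ℓ a ≤ h a) :
    ∀ t ∈ Ico a b, ℓ t ≤ h t := fun t ht => by
  have hmem : ∀ s ∈ Icc a t, s ∈ Ico a b := fun s hs => ⟨hs.1, hs.2.trans_lt ht.2⟩
  have hmem' : ∀ s ∈ Ico a t, s ∈ Ico a b := fun s hs => hmem s (Ico_subset_Icc_self hs)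
  exact image_le_of_deriv_right_lt_deriv_boundary' (f := ℓ) (B := h)
    (HasDerivAt.continuousOn fun s hs => hℓ s (hmem s hs))
    (fun s hs => (hℓ s (hmem' s hs)).hasDerivWithinAt) ha
    (HasDerivAt.continuousOn fun s hs => hh s (hmem s hs))
    (fun s hs => (hh s (hmem' s hs)).hasDerivWithinAt)
    (fun s hs heq => heq ▸ hsub s (hmem' s hs)) ⟨ht.1, le_rfl⟩

theorem exists_isIntegralCurveOn_of_barriers {ℓ' g : ℝ → ℝ} (hαβ : α < β)
    (hv : ∀ t ∈ Ioo α β, ∀ x ∈ Icc (ℓ t) (u t), ContDiffAt ℝ 1 (Function.uncurry v) (t, x))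
    (hℓ : ∀ t ∈ Ioo α β, HasDerivAt ℓ (ℓ' t) t) (hsub : ∀ t ∈ Ioo α β, ℓ' t < v t (ℓ t))
    (hu : IsIntegralCurveOn u v (Ioo α β)) (hℓu : ∀ t ∈ Ioo α β, ℓ t ≤ u t)
    (hg : ∀ᶠ t in 𝓝[>] α, HasDerivAt g (v t (g t)) t)
    (hgmem : ∀ᶠ t in 𝓝[>] α, g t ∈ Ico (ℓ t) (u t)) :
    ∃ h, h =ᶠ[𝓝[>] α] g ∧ IsIntegralCurveOn h v (Ioo α β) ∧
      ∀ t ∈ Ioo α β, h t ∈ Ico (ℓ t) (u t) := by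
  have hclamp := cauchyLipschitzOn_clampField (HasDerivAt.continuousOn hℓ) hu.continuousOn hℓu hv
  have hu' := (isIntegralCurveOn_clampField_iff fun t ht => right_mem_Icc.2 (hℓu t ht)).2 hu
  obtain ⟨c, hc, hgc⟩ := (mem_nhdsGT_iff_exists_Ioo_subset' hαβ).1 (hg.and hgmem)
  have hsubset : Ioo α (min c β) ⊆ Ioo α β := Ioo_subset_Ioo_right (min_le_right _ _)
  have hgc' : ∀ t ∈ Ioo α (min c β), HasDerivAt g (v t (g t)) t ∧ g t ∈ Ico (ℓ t) (u t) :=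
    fun t ht => hgc ⟨ht.1, ht.2.trans_le (min_le_left _ _)⟩
  have hg' : IsIntegralCurveOn g (clampField v ℓ u) (Ioo α (min c β)) :=
    (isIntegralCurveOn_clampField_iff fun t ht => Ico_subset_Icc_self (hgc' t ht).2).2
      fun t ht => (hgc' t ht).1.hasDerivWithinAt
  obtain ⟨t₀, ht₀⟩ : (Ioo α (min c β)).Nonempty := nonempty_Ioo.2 (lt_min hc hαβ)
  obtain ⟨h, hh₀, hh⟩ := hclamp.exists_isIntegralCurveOn_Ioo (hsubset ht₀) (g t₀)
  have heq : EqOn h g (Ioo α (min c β)) :=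
    (hclamp.mono hsubset).eqOn_Ioo (hh.mono hsubset) hg' ht₀ hh₀
  have hlt : ∀ t ∈ Ioo α β, h t < u t :=
    hclamp.lt_of_lt hh hu' (hsubset ht₀) (hh₀ ▸ (hgc' t₀ ht₀).2.2)
  have hge : ∀ t ∈ Ioo α β, ℓ t ≤ h t := fun t ht => by
    rcases lt_or_ge t t₀ with htt₀ | htt₀
    · have ht' : t ∈ Ioo α (min c β) := ⟨ht.1, htt₀.trans ht₀.2⟩
      exact heq ht' ▸ (hgc' t ht').2.1
    · have hmem : ∀ s ∈ Ico t₀ β, s ∈ Ioo α β := fun s hs => ⟨ht₀.1.trans_le hs.1, hs.2⟩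
      refine le_of_strict_subsolution (fun s hs => hℓ s (hmem s hs)) (fun s hs => ?_)
        (fun s hs => (hh.isIntegralCurveAt (isOpen_Ioo.mem_nhds (hmem s hs))).hasDerivAt)
        (hh₀ ▸ (hgc' t₀ ht₀).2.1) t ⟨htt₀, ht.2⟩
      rw [clampField_of_mem (left_mem_Icc.2 (hℓu s (hmem s hs)))]
      exact hsub s (hmem s hs)
  exact ⟨h, heq.eventuallyEq_of_mem (Ioo_mem_nhdsGT (lt_min hc hαβ)),
    (isIntegralCurveOn_clampField_iff fun t ht => ⟨hge t ht, (hlt t ht).le⟩).1 hh,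
    fun t ht => ⟨hge t ht, hlt t ht⟩⟩

end Barriers

section ExtensionToIcc

variable {f : ℝ → ℝ} {a b s la lb : ℝ}

theorem tendsto_zero_of_tendsto_div_sub (h : Tendsto (fun t => f t / (t - a)) (𝓝[>] a) (𝓝 s)) :
    Tendsto f (𝓝[>] a) (𝓝 0) := by
  have hsub : Tendsto (fun t => t - a) (𝓝[>] a) (𝓝 0) :=
    tendsto_nhdsWithin_of_tendsto_nhds (Continuous.tendsto' (by fun_prop) a 0 (sub_self a))
  have hmul := h.mul hsub
  rw [mul_zero] at hmul
  refine hmul.congr' ?_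
  filter_upwards [self_mem_nhdsWithin] with t ht
  exact div_mul_cancel₀ _ (sub_pos.2 ht).ne'

theorem exists_continuousOn_Icc_eqOn_Ioo (hab : a < b) (hf : ContinuousOn f (Ioo a b))
    (ha : Tendsto f (𝓝[>] a) (𝓝 la)) (hb : Tendsto f (𝓝[<] b) (𝓝 lb)) :
    ∃ g : ℝ → ℝ, ContinuousOn g (Icc a b) ∧ g a = la ∧ g b = lb ∧ EqOn g f (Ioo a b) :=
  ⟨extendFrom (Ioo a b) f, continuousOn_Icc_extendFrom_Ioo hf ha hb,
    eq_lim_at_left_extendFrom_Ioo hab ha, eq_lim_at_right_extendFrom_Ioo hab hb,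
    fun t ht => extendFrom_eq (subset_closure ht) (hf t ht)⟩

end ExtensionToIcc

section PhasePlane

variable {γ μ η U H V : ℝ}

theorem k₂_pos (hγ1 : 1 < γ) (hμ1 : μ < 1) : 0 < k₂ γ μ :=
  div_pos (by linarith) (by linarith)

theorem sub_one_mul_k₂ (hγ1 : 1 < γ) : (γ - 1) * k₂ γ μ = 2 * (1 - μ) :=
  mul_div_cancel₀ _ (sub_pos.2 hγ1).ne'

theorem three_sub_mul_UD (hγ3 : γ < 3) : (3 - γ) * UD γ = 2 :=
  mul_div_cancel₀ _ (sub_pos.2 hγ3).ne'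

theorem one_lt_UD (hγ1 : 1 < γ) (hγ3 : γ < 3) : 1 < UD γ :=
  (one_lt_div (by linarith)).2 (by linarith)

/-- The right-hand side of `dH/dU = F/G`, with the independent variable `U` first. -/
noncomputable def slopeField (γ μ U H : ℝ) : ℝ := F γ μ H U / G γ μ H U

theorem contDiffAt_slopeField (hG : G γ μ H U ≠ 0) :
    ContDiffAt ℝ 1 (Function.uncurry (slopeField γ μ)) (U, H) := by
  refine ContDiffAt.div (f := fun p : ℝ × ℝ => F γ μ p.2 p.1)
    (g := fun p : ℝ × ℝ => G γ μ p.2 p.1) ?_ ?_ hG <;> simp only [F, G] <;> fun_prop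

theorem F_eq (γ μ H U : ℝ) :
    F γ μ H U = 2 * H * (H - (U - 1) * (U - μ) + (γ - 1) * (1 - μ) / 2 * U) := by
  simp only [F, k₁]
  ring

theorem G_eq_mul_sub_HG (hU : 0 < U + k₂ γ μ) : G γ μ H U = (U + k₂ γ μ) * (H - HG γ μ U) := by
  rw [G, HG, mul_sub (U + k₂ γ μ), mul_div_cancel₀ _ hU.ne']
  ring

theorem HG_lt_iff (hU : 0 < U + k₂ γ μ) : HG γ μ U < H ↔ 0 < G γ μ H U := by
  rw [G_eq_mul_sub_HG hU, mul_pos_iff_of_pos_left hU, sub_pos]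

theorem G_lt_G_iff {H' : ℝ} (hU : 0 < U + k₂ γ μ) : G γ μ H U < G γ μ H' U ↔ H < H' := by
  rw [G_eq_mul_sub_HG hU, G_eq_mul_sub_HG hU, mul_lt_mul_iff_right₀ hU, sub_lt_sub_iff_right]

/-- The special solution `((γ-1)²/4) U²` of `dH/dU = F/G`. -/
noncomputable def upperBarrier (γ U : ℝ) : ℝ := (γ - 1) ^ 2 / 4 * U ^ 2

theorem G_upperBarrier (hγ1 : 1 < γ) (hγ3 : γ < 3) :
    G γ μ (upperBarrier γ U) U = (3 - γ) / 4 * U * (UD γ - U) * ((γ + 1) * U - 2 * μ) := by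
  simp only [G, upperBarrier]
  linear_combination (γ - 1) * U ^ 2 / 4 * sub_one_mul_k₂ (μ := μ) hγ1
    - U * ((γ + 1) * U - 2 * μ) / 4 * three_sub_mul_UD hγ3

theorem G_upperBarrier_pos (hγ1 : 1 < γ) (hγ3 : γ < 3) (hμ1 : μ < 1) (hU : U ∈ Ioo 1 (UD γ)) :
    0 < G γ μ (upperBarrier γ U) U := by
  have hU1 : 1 < U := hU.1
  have hUD : 0 < UD γ - U := sub_pos.2 hU.2
  have : 0 < 3 - γ := sub_pos.2 hγ3
  have hlin : 0 < (γ + 1) * U - 2 * μ := by nlinarith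
  rw [G_upperBarrier hγ1 hγ3]
  positivity

theorem F_upperBarrier (hγ1 : 1 < γ) :
    F γ μ (upperBarrier γ U) U = (γ - 1) ^ 2 / 2 * U * G γ μ (upperBarrier γ U) U := by
  simp only [F_eq, G, upperBarrier]
  linear_combination -(γ - 1) ^ 3 / 8 * U ^ 3 * sub_one_mul_k₂ (μ := μ) hγ1

theorem isIntegralCurveOn_upperBarrier (hγ1 : 1 < γ) (hγ3 : γ < 3) (hμ1 : μ < 1) :
    IsIntegralCurveOn (upperBarrier γ) (slopeField γ μ) (Ioo 1 (UD γ)) := fun U hU => by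
  have hderiv : HasDerivAt (upperBarrier γ) ((γ - 1) ^ 2 / 2 * U) U :=
    ((hasDerivAt_pow 2 U).const_mul ((γ - 1) ^ 2 / 4)).congr_deriv (by ring)
  rw [slopeField, F_upperBarrier hγ1,
    mul_div_cancel_right₀ _ (G_upperBarrier_pos hγ1 hγ3 hμ1 hU).ne']
  exact hderiv.hasDerivWithinAt

theorem upperBarrier_UD (hγ3 : γ < 3) : upperBarrier γ (UD γ) = HD γ := by
  have : 3 - γ ≠ 0 := (sub_pos.2 hγ3).ne'
  simp only [upperBarrier, UD, HD]
  field_simp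
  ring

theorem HG_UD (hγ1 : 1 < γ) (hγ3 : γ < 3) (hμ1 : μ < 1) : HG γ μ (UD γ) = HD γ := by
  have hpos : 0 < UD γ + k₂ γ μ := by
    linarith [one_lt_UD hγ1 hγ3, k₂_pos hγ1 hμ1]
  have hG : G γ μ (upperBarrier γ (UD γ)) (UD γ) = 0 := by
    rw [G_upperBarrier hγ1 hγ3, sub_self, mul_zero, zero_mul]
  rw [G_eq_mul_sub_HG hpos, mul_eq_zero, or_iff_right hpos.ne', sub_eq_zero] at hG
  rw [← hG, upperBarrier_UD hγ3]

theorem tendsto_HD_of_HG_lt_of_lt_upperBarrier {h : ℝ → ℝ} (hγ1 : 1 < γ) (hγ3 : γ < 3)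
    (hμ1 : μ < 1) (hh : ∀ U ∈ Ioo 1 (UD γ), HG γ μ U < h U ∧ h U < upperBarrier γ U) :
    Tendsto h (𝓝[<] UD γ) (𝓝 (HD γ)) := by
  have hpos : UD γ + k₂ γ μ ≠ 0 := by linarith [one_lt_UD hγ1 hγ3, k₂_pos hγ1 hμ1]
  have hlow : ContinuousAt (HG γ μ) (UD γ) := by
    unfold HG
    fun_prop (disch := exact hpos)
  have hup : ContinuousAt (upperBarrier γ) (UD γ) := by
    unfold upperBarrier
    fun_prop
  have hmem : ∀ᶠ U in 𝓝[<] UD γ, U ∈ Ioo 1 (UD γ) := Ioo_mem_nhdsLT (one_lt_UD hγ1 hγ3)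
  exact tendsto_of_tendsto_of_tendsto_of_le_of_le'
    (HG_UD hγ1 hγ3 hμ1 ▸ hlow.tendsto.mono_left nhdsWithin_le_nhds)
    (upperBarrier_UD hγ3 ▸ hup.tendsto.mono_left nhdsWithin_le_nhds)
    (hmem.mono fun U hU => (hh U hU).1.le) (hmem.mono fun U hU => (hh U hU).2.le)

/-- The curve `G = η (U - 1) (U_D - U)` solved for `H`. -/
noncomputable def lowerBarrier (γ μ η U : ℝ) : ℝ :=
  HG γ μ U + η * ((U - 1) * (UD γ - U)) / (U + k₂ γ μ)

theorem G_lowerBarrier (hU : 0 < U + k₂ γ μ) :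
    G γ μ (lowerBarrier γ μ η U) U = η * ((U - 1) * (UD γ - U)) := by
  rw [G_eq_mul_sub_HG hU, lowerBarrier, add_sub_cancel_left, mul_div_cancel₀ _ hU.ne']

theorem hasDerivAt_lowerBarrier (hU : 0 < U + k₂ γ μ) :
    HasDerivAt (lowerBarrier γ μ η) ((3 * U ^ 2 - 2 * (1 + μ) * U + μ + η * (1 + UD γ - 2 * U)
      - lowerBarrier γ μ η U) / (U + k₂ γ μ)) U := by
  have hnum : HasDerivAt (fun U => U * (U - 1) * (U - μ) + η * ((U - 1) * (UD γ - U)))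
      (3 * U ^ 2 - 2 * (1 + μ) * U + μ + η * (1 + UD γ - 2 * U)) U := by
    have hid := hasDerivAt_id' U
    refine (((hid.mul (hid.sub_const 1)).mul (hid.sub_const μ)).add
      (((hid.sub_const 1).mul (hid.const_sub (UD γ))).const_mul η)).congr_deriv ?_
    simp only [Pi.mul_apply]
    ring
  have heq : lowerBarrier γ μ η = fun U =>
      (U * (U - 1) * (U - μ) + η * ((U - 1) * (UD γ - U))) / (U + k₂ γ μ) := by
    ext U
    rw [lowerBarrier, HG, add_div]
  rw [heq]
  refine (hnum.div ((hasDerivAt_id' U).add_const (k₂ γ μ)) hU.ne').congr_deriv ?_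
  field_simp

/-- The quotient of `F` by `(U - 1) (U_D - U)` on the curve `G = 0`. -/
noncomputable def nullclineRate (γ μ U : ℝ) : ℝ :=
  k₂ γ μ * (3 - γ) * U * (U - μ) * ((γ + 1) * U - 2 * μ) / (2 * (U + k₂ γ μ) ^ 2)

theorem nullclineRate_pos (hγ1 : 1 < γ) (hγ3 : γ < 3) (hμ1 : μ < 1) (hU : 1 ≤ U) :
    0 < nullclineRate γ μ U := by
  have hk := k₂_pos hγ1 hμ1
  have : 0 < 3 - γ := sub_pos.2 hγ3
  have hUμ : 0 < U - μ := by linarith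
  have hlin : 0 < (γ + 1) * U - 2 * μ := by nlinarith
  unfold nullclineRate
  positivity

/-- The branch of the curve `F = 0` other than `H = 0`, solved for `H`. -/
noncomputable def HF (γ μ U : ℝ) : ℝ := U ^ 2 - k₁ γ μ * U + μ

theorem F_eq_mul_sub_HF (γ μ H U : ℝ) : F γ μ H U = 2 * H * (H - HF γ μ U) := rfl

theorem G_HF (hγ1 : 1 < γ) (hγ3 : γ < 3) :
    G γ μ (HF γ μ U) U = -(k₂ γ μ * (3 - γ) / 4 * (UD γ - U) * ((γ + 1) * U - 2 * μ)) := by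
  simp only [G, HF, k₁]
  linear_combination (γ - 1) * U ^ 2 / 4 * sub_one_mul_k₂ (μ := μ) hγ1
    + k₂ γ μ * ((γ + 1) * U - 2 * μ) / 4 * three_sub_mul_UD hγ3

theorem HG_sub_HF (hγ1 : 1 < γ) (hγ3 : γ < 3) (hU : 0 < U + k₂ γ μ) :
    HG γ μ U - HF γ μ U =
      k₂ γ μ * (3 - γ) / 4 * (UD γ - U) * ((γ + 1) * U - 2 * μ) / (U + k₂ γ μ) := by
  rw [eq_div_iff hU.ne', mul_comm, ← neg_inj, ← G_HF hγ1 hγ3, G_eq_mul_sub_HG hU]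
  ring

theorem F_HG (hγ1 : 1 < γ) (hγ3 : γ < 3) (hU : 0 < U + k₂ γ μ) :
    F γ μ (HG γ μ U) U = (U - 1) * (UD γ - U) * nullclineRate γ μ U := by
  rw [F_eq_mul_sub_HF, HG_sub_HF hγ1 hγ3 hU, HG, nullclineRate]
  field_simp
  ring

theorem HF_lt_HG (hγ1 : 1 < γ) (hγ3 : γ < 3) (hμ1 : μ < 1) (hU : U ∈ Ioo 1 (UD γ)) :
    HF γ μ U < HG γ μ U := by
  have hk := k₂_pos hγ1 hμ1
  have hU1 : 1 < U := hU.1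
  have hUk : 0 < U + k₂ γ μ := by linarith
  have hUD : 0 < UD γ - U := sub_pos.2 hU.2
  have : 0 < 3 - γ := sub_pos.2 hγ3
  have hlin : 0 < (γ + 1) * U - 2 * μ := by nlinarith
  rw [← sub_pos, HG_sub_HF hγ1 hγ3 hUk]
  positivity

theorem le_F_of_HG_le (hγ1 : 1 < γ) (hγ3 : γ < 3) (hμ1 : μ < 1) (hU : U ∈ Ioo 1 (UD γ))
    (hH : HG γ μ U ≤ H) : (U - 1) * (UD γ - U) * nullclineRate γ μ U ≤ F γ μ H U := by
  have hU1 : 0 < U - 1 := sub_pos.2 hU.1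
  have hUμ : 0 < U - μ := by linarith
  have hUk : 0 < U + k₂ γ μ := by linarith [k₂_pos hγ1 hμ1]
  have hHG : 0 < HG γ μ U := div_pos (mul_pos (mul_pos (by linarith) hU1) hUμ) hUk
  have hHF := HF_lt_HG hγ1 hγ3 hμ1 hU
  rw [← F_HG hγ1 hγ3 hUk, F_eq_mul_sub_HF, F_eq_mul_sub_HF]
  exact mul_le_mul (by linarith) (by linarith) (by linarith) (by linarith)

theorem eventually_mul_deriv_lowerBarrier_lt (hγ1 : 1 < γ) (hγ3 : γ < 3) (hμ1 : μ < 1) :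
    ∀ᶠ η in 𝓝 0, ∀ U ∈ Icc 1 (UD γ), η * deriv (lowerBarrier γ μ η) U < nullclineRate γ μ U := by
  have hUk : ∀ {U : ℝ}, U ∈ Icc 1 (UD γ) → 0 < U + k₂ γ μ := fun hU => by
    linarith [hU.1, k₂_pos hγ1 hμ1]
  let D : ℝ × ℝ → ℝ := fun p => (3 * p.2 ^ 2 - 2 * (1 + μ) * p.2 + μ
    + p.1 * (1 + UD γ - 2 * p.2) - lowerBarrier γ μ p.1 p.2) / (p.2 + k₂ γ μ)
  have hlt : ∀ᶠ η in 𝓝 0, ∀ U ∈ Icc 1 (UD γ), η * D (η, U) < nullclineRate γ μ U := by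
    refine isCompact_Icc.eventually_forall_of_forall_eventually fun U hU => ?_
    have hD : ContinuousAt (fun p : ℝ × ℝ => p.1 * D p) (0, U) := by
      simp only [D, lowerBarrier, HG]
      fun_prop (disch := exact (hUk hU).ne')
    have hrate : ContinuousAt (fun p : ℝ × ℝ => nullclineRate γ μ p.2) (0, U) := by
      simp only [nullclineRate]
      fun_prop (disch := have := hUk hU; positivity)
    exact hD.eventually_lt hrate (by simpa using nullclineRate_pos hγ1 hγ3 hμ1 hU.1)
  filter_upwards [hlt] with η hη U hU
  rw [(hasDerivAt_lowerBarrier (hUk hU)).deriv]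
  exact hη U hU

theorem eventually_deriv_lowerBarrier_lt_slopeField (hγ1 : 1 < γ) (hγ3 : γ < 3) (hμ1 : μ < 1) :
    ∀ᶠ η in 𝓝[>] 0, ∀ U ∈ Ioo 1 (UD γ),
      deriv (lowerBarrier γ μ η) U < slopeField γ μ U (lowerBarrier γ μ η U) := by
  filter_upwards [self_mem_nhdsWithin, nhdsWithin_le_nhds
    (eventually_mul_deriv_lowerBarrier_lt hγ1 hγ3 hμ1)] with η (hη : 0 < η) hlt U hU
  have hUk : 0 < U + k₂ γ μ := by linarith [hU.1, k₂_pos hγ1 hμ1]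
  have hpos : 0 < (U - 1) * (UD γ - U) := mul_pos (sub_pos.2 hU.1) (sub_pos.2 hU.2)
  have hle : HG γ μ U ≤ lowerBarrier γ μ η U := le_add_of_nonneg_right (by positivity)
  rw [slopeField, G_lowerBarrier hUk, lt_div_iff₀ (by positivity)]
  calc deriv (lowerBarrier γ μ η) U * (η * ((U - 1) * (UD γ - U)))
      = (U - 1) * (UD γ - U) * (η * deriv (lowerBarrier γ μ η) U) := by ring
    _ < (U - 1) * (UD γ - U) * nullclineRate γ μ U :=
        mul_lt_mul_of_pos_left (hlt U (Ioo_subset_Icc_self hU)) hpos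
    _ ≤ F γ μ (lowerBarrier γ μ η U) U := le_F_of_HG_le hγ1 hγ3 hμ1 hU hle

theorem eventually_lowerBarrier_lt_upperBarrier (hγ1 : 1 < γ) (hγ3 : γ < 3) (hμ1 : μ < 1) :
    ∀ᶠ η in 𝓝 0, ∀ U ∈ Ioo 1 (UD γ), lowerBarrier γ μ η U < upperBarrier γ U := by
  have hpos : 0 < (3 - γ) / 4 * (γ + 1 - 2 * μ) := mul_pos (by linarith) (by linarith)
  filter_upwards [gt_mem_nhds hpos] with η hη U hU
  have hU1 : 0 < U - 1 := sub_pos.2 hU.1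
  have hUD : 0 < UD γ - U := sub_pos.2 hU.2
  have hUk : 0 < U + k₂ γ μ := by linarith [k₂_pos hγ1 hμ1]
  have hlin : γ + 1 - 2 * μ ≤ (γ + 1) * U - 2 * μ := by nlinarith
  rw [← G_lt_G_iff hUk, G_lowerBarrier hUk, G_upperBarrier hγ1 hγ3]
  calc η * ((U - 1) * (UD γ - U))
      < (3 - γ) / 4 * (γ + 1 - 2 * μ) * ((U - 1) * (UD γ - U)) :=
        mul_lt_mul_of_pos_right hη (mul_pos hU1 hUD)
    _ ≤ (3 - γ) / 4 * ((γ + 1) * U - 2 * μ) * (U * (UD γ - U)) := by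
        have : 0 < 3 - γ := sub_pos.2 hγ3
        have hpos' := hpos.le.trans (mul_le_mul_of_nonneg_left hlin (by linarith))
        gcongr
        linarith
    _ = (3 - γ) / 4 * U * (UD γ - U) * ((γ + 1) * U - 2 * μ) := by ring

theorem eventually_lowerBarrier_lt {g : ℝ → ℝ} (hγ1 : 1 < γ) (hμ1 : μ < 1)
    (hη : η * (UD γ - 1) < (γ - 1) * (1 - μ))
    (hg : Tendsto (fun U => g U / (U - 1)) (𝓝[>] 1) (𝓝 (γ * (1 - μ) / (1 + k₂ γ μ)))) :
    ∀ᶠ U in 𝓝[>] 1, lowerBarrier γ μ η U < g U := by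
  have hk : 0 < 1 + k₂ γ μ := by linarith [k₂_pos hγ1 hμ1]
  have hcont : ContinuousAt (fun U => (U * (U - μ) + η * (UD γ - U)) / (U + k₂ γ μ)) 1 := by
    fun_prop (disch := exact hk.ne')
  have hlt : (1 * (1 - μ) + η * (UD γ - 1)) / (1 + k₂ γ μ) < γ * (1 - μ) / (1 + k₂ γ μ) :=
    div_lt_div_of_pos_right (by linarith) hk
  filter_upwards [self_mem_nhdsWithin,
    (hcont.tendsto.mono_left nhdsWithin_le_nhds).eventually_lt hg hlt] with U (hU : 1 < U) hlt
  calc lowerBarrier γ μ η U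
      = (U * (U - μ) + η * (UD γ - U)) / (U + k₂ γ μ) * (U - 1) := by
        rw [lowerBarrier, HG]
        ring
    _ < g U := (lt_div_iff₀ (sub_pos.2 hU)).1 hlt

theorem eventually_lt_upperBarrier {g : ℝ → ℝ} (hγ1 : 1 < γ) (hg : Tendsto g (𝓝[>] 1) (𝓝 0)) :
    ∀ᶠ U in 𝓝[>] 1, g U < upperBarrier γ U := by
  have hcont : ContinuousAt (upperBarrier γ) 1 := by
    unfold upperBarrier
    fun_prop
  exact hg.eventually_lt (hcont.tendsto.mono_left nhdsWithin_le_nhds)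
    (mul_pos (div_pos (pow_pos (sub_pos.2 hγ1) 2) four_pos) (by norm_num))

/-- The field `F/G` in the blow-up coordinates `U = 1 + V`, `H = V w` around `B = (1, 0)`, with the
common factor `V` cancelled so that it extends to `V = 0`. -/
noncomputable def blowUpSlope (γ μ V w : ℝ) : ℝ :=
  2 * w * (V * w - V * (1 + V - μ) + (γ - 1) * (1 - μ) / 2 * (1 + V)) /
    (w * (1 + V + k₂ γ μ) - (1 + V) * (1 + V - μ))

theorem slopeField_one_add (hV : V ≠ 0) (w : ℝ) :
    slopeField γ μ (1 + V) (V * w) = blowUpSlope γ μ V w := by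
  rw [slopeField, F_eq, G, blowUpSlope]
  refine Eq.trans ?_ (mul_div_mul_left _ _ hV)
  congr 1 <;> ring

theorem blowUpSlope_zero (γ μ : ℝ) : blowUpSlope γ μ 0 =
    fun w => w * ((γ - 1) * (1 - μ)) / (w * (1 + k₂ γ μ) - (1 - μ)) := by
  ext w
  rw [blowUpSlope]
  ring_nf

/-- The slope at which the integral curve leaves `B = (1, 0)`. -/
noncomputable def slopeB (γ μ : ℝ) : ℝ := γ * (1 - μ) / (1 + k₂ γ μ)

theorem slopeB_mul_sub (hγ1 : 1 < γ) (hμ1 : μ < 1) :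
    slopeB γ μ * (1 + k₂ γ μ) - (1 - μ) = (γ - 1) * (1 - μ) := by
  rw [slopeB, div_mul_cancel₀ _ (by linarith [k₂_pos hγ1 hμ1])]
  ring

theorem contDiffAt_blowUpSlope (hγ1 : 1 < γ) (hμ1 : μ < 1) :
    ContDiffAt ℝ 1 (Function.uncurry (blowUpSlope γ μ)) (0, slopeB γ μ) := by
  refine ContDiffAt.div (by fun_prop) (by fun_prop) ?_
  rw [add_zero, one_mul, slopeB_mul_sub hγ1 hμ1]
  exact (mul_pos (sub_pos.2 hγ1) (sub_pos.2 hμ1)).ne'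

theorem blowUpSlope_slopeB (hγ1 : 1 < γ) (hμ1 : μ < 1) :
    blowUpSlope γ μ 0 (slopeB γ μ) = slopeB γ μ := by
  simp only [blowUpSlope_zero, slopeB_mul_sub hγ1 hμ1]
  exact mul_div_cancel_right₀ _ (mul_pos (sub_pos.2 hγ1) (sub_pos.2 hμ1)).ne'

theorem hasDerivAt_blowUpSlope (hγ1 : 1 < γ) (hμ1 : μ < 1) :
    HasDerivAt (blowUpSlope γ μ 0) (-(γ - 1)⁻¹) (slopeB γ μ) := by
  have hden := slopeB_mul_sub hγ1 hμ1
  have hγ : γ - 1 ≠ 0 := (sub_pos.2 hγ1).ne'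
  have hμ : 1 - μ ≠ 0 := (sub_pos.2 hμ1).ne'
  have hid := hasDerivAt_id' (slopeB γ μ)
  rw [blowUpSlope_zero]
  refine ((hid.mul_const _).fun_div ((hid.mul_const (1 + k₂ γ μ)).sub_const (1 - μ))
    (hden.trans_ne (mul_ne_zero hγ hμ))).congr_deriv ?_
  rw [hden]
  field_simp
  linear_combination -hden

/- With `H = V w` and `U = 1 + V` the equation becomes `V w' = blowUpSlope V w - w`, whose
linearisation in `w` at `V = 0` is `-γ / (γ - 1) < 0`. -/
theorem exists_hasDerivAt_slopeField (hγ1 : 1 < γ) (hμ1 : μ < 1) :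
    ∃ g : ℝ → ℝ, (∀ᶠ U in 𝓝[>] 1, HasDerivAt g (slopeField γ μ U (g U)) U) ∧
      Tendsto (fun U => g U / (U - 1)) (𝓝[>] 1) (𝓝 (slopeB γ μ)) := by
  have hs := blowUpSlope_slopeB hγ1 hμ1
  obtain ⟨w, hw, hw0, hwd⟩ := exists_hasDerivAt_div_of_contDiffAt
    (Φ := fun V w => blowUpSlope γ μ V w - w) (a := 1 + (γ - 1)⁻¹)
    ((contDiffAt_blowUpSlope hγ1 hμ1).sub contDiffAt_snd) (sub_eq_zero.2 hs)
    (((hasDerivAt_blowUpSlope hγ1 hμ1).sub (hasDerivAt_id' _)).congr_deriv (by ring))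
    (by have := sub_pos.2 hγ1; positivity)
  have hsub0 : Tendsto (fun U : ℝ => U - 1) (𝓝 1) (𝓝 0) :=
    Continuous.tendsto' (by fun_prop) 1 0 (sub_self 1)
  have hshift : Tendsto (fun U : ℝ => U - 1) (𝓝[>] 1) (𝓝[≠] 0) :=
    tendsto_nhdsWithin_iff.2 ⟨hsub0.mono_left nhdsWithin_le_nhds,
      eventually_mem_nhdsWithin.mono fun U hU => (sub_pos.2 hU).ne'⟩
  refine ⟨fun U => (U - 1) * w (U - 1), ?_, ?_⟩
  · filter_upwards [self_mem_nhdsWithin, hshift.eventually hwd] with U hU hwU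
    have hV : U - 1 ≠ 0 := (sub_pos.2 hU).ne'
    have hsub : HasDerivAt (fun U : ℝ => U - 1) 1 U := (hasDerivAt_id' U).sub_const 1
    refine (hsub.fun_mul (hwU.comp U hsub)).congr_deriv ?_
    have hslope := slopeField_one_add (γ := γ) (μ := μ) hV (w (U - 1))
    rw [add_sub_cancel] at hslope
    rw [hslope, Function.comp_apply]
    field_simp
    ring
  · refine (hw0 ▸ hw.tendsto 0 |>.comp (hshift.mono_right nhdsWithin_le_nhds)).congr' ?_
    filter_upwards [self_mem_nhdsWithin] with U hU
    exact (mul_div_cancel_left₀ _ (sub_pos.2 hU).ne').symm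

theorem exists_isIntegralCurveOn_slopeField (hγ1 : 1 < γ) (hγ3 : γ < 3) (hμ1 : μ < 1) :
    ∃ h : ℝ → ℝ, IsIntegralCurveOn h (slopeField γ μ) (Ioo 1 (UD γ)) ∧
      (∀ U ∈ Ioo 1 (UD γ), HG γ μ U < h U ∧ h U < upperBarrier γ U) ∧
      Tendsto (fun U => h U / (U - 1)) (𝓝[>] 1) (𝓝 (slopeB γ μ)) := by
  have hUk : ∀ U ∈ Ioo 1 (UD γ), 0 < U + k₂ γ μ := fun U hU => by
    linarith [hU.1, k₂_pos hγ1 hμ1]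
  obtain ⟨g, hg, hgB⟩ := exists_hasDerivAt_slopeField hγ1 hμ1
  have hsmall : ∀ᶠ η in 𝓝 0, η * (UD γ - 1) < (γ - 1) * (1 - μ) :=
    (Continuous.tendsto' (by fun_prop) 0 0 (zero_mul (UD γ - 1))).eventually_lt_const
      (mul_pos (sub_pos.2 hγ1) (sub_pos.2 hμ1))
  obtain ⟨η, hsub, ⟨hηupper, hηB⟩, hη⟩ :=
    ((eventually_deriv_lowerBarrier_lt_slopeField hγ1 hγ3 hμ1).and
      ((((eventually_lowerBarrier_lt_upperBarrier hγ1 hγ3 hμ1).and hsmall).filter_mono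
        nhdsWithin_le_nhds).and eventually_mem_nhdsWithin)).exists
  have hHG : ∀ U ∈ Ioo 1 (UD γ), HG γ μ U < lowerBarrier γ μ η U := fun U hU => by
    rw [HG_lt_iff (hUk U hU), G_lowerBarrier (hUk U hU)]
    exact mul_pos hη (mul_pos (sub_pos.2 hU.1) (sub_pos.2 hU.2))
  obtain ⟨h, hhg, hh, hmem⟩ := exists_isIntegralCurveOn_of_barriers (one_lt_UD hγ1 hγ3)
    (fun U hU H hH => contDiffAt_slopeField
      ((HG_lt_iff (hUk U hU)).1 ((hHG U hU).trans_le hH.1)).ne')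
    (fun U hU => (hasDerivAt_lowerBarrier (hUk U hU)).differentiableAt.hasDerivAt) hsub
    (isIntegralCurveOn_upperBarrier hγ1 hγ3 hμ1) (fun U hU => (hηupper U hU).le) hg
    (((eventually_lowerBarrier_lt hγ1 hμ1 hηB hgB).and
      (eventually_lt_upperBarrier hγ1 (tendsto_zero_of_tendsto_div_sub hgB))).mono
      fun U hU => ⟨hU.1.le, hU.2⟩)
  refine ⟨h, hh, fun U hU => ⟨(hHG U hU).trans_le (hmem U hU).1, (hmem U hU).2⟩, hgB.congr' ?_⟩
  filter_upwards [hhg] with U hU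
  rw [hU]

end PhasePlane

theorem stmt15_general {γ μ : ℝ} (hγ1 : 1 < γ) (hγ3 : γ < 3) (hμ1 : μ < 1) :
    ∃ H : ℝ → ℝ,
      ContinuousOn H (Icc (1 : ℝ) (UD γ)) ∧
      H 1 = 0 ∧
      H (UD γ) = HD γ ∧
      (∀ U ∈ Ioo (1 : ℝ) (UD γ), HG γ μ U < H U ∧ H U < (γ - 1) ^ 2 / 4 * U ^ 2) ∧
      (∀ U ∈ Ioo (1 : ℝ) (UD γ), DifferentiableAt ℝ H U ∧
        deriv H U * G γ μ (H U) U = F γ μ (H U) U) ∧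
      Tendsto (fun U : ℝ => H U / (U - 1)) (𝓝[>] (1 : ℝ))
        (𝓝 (γ * (1 - μ) / (1 + k₂ γ μ))) := by
  obtain ⟨h, hh, hmem, hB⟩ := exists_isIntegralCurveOn_slopeField hγ1 hγ3 hμ1
  obtain ⟨H, hcont, hH1, hHD, heq⟩ := exists_continuousOn_Icc_eqOn_Ioo (one_lt_UD hγ1 hγ3)
    hh.continuousOn (tendsto_zero_of_tendsto_div_sub hB)
    (tendsto_HD_of_HG_lt_of_lt_upperBarrier hγ1 hγ3 hμ1 hmem)
  refine ⟨H, hcont, hH1, hHD, fun U hU => heq hU ▸ hmem U hU, fun U hU => ?_, hB.congr' ?_⟩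
  · have hnhds : Ioo 1 (UD γ) ∈ 𝓝 U := isOpen_Ioo.mem_nhds hU
    have hderiv : HasDerivAt H (slopeField γ μ U (H U)) U := heq hU ▸
      (hh.isIntegralCurveAt hnhds).hasDerivAt.congr_of_eventuallyEq (heq.eventuallyEq_of_mem hnhds)
    have hGpos : 0 < G γ μ (H U) U :=
      (HG_lt_iff (by linarith [hU.1, k₂_pos hγ1 hμ1])).1 (heq hU ▸ (hmem U hU).1)
    exact ⟨hderiv.differentiableAt, hderiv.deriv ▸ div_mul_cancel₀ _ hGpos.ne'⟩
  · filter_upwards [Ioo_mem_nhdsGT (one_lt_UD hγ1 hγ3)] with U hU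
    rw [heq hU]

/-- existence of an integral curve of `dH/dU = F/G` connecting
`B = (1,0)` (which it leaves with slope `γ(1-μ)/(1+k₂)`) to `D = (U_D,H_D)`, staying
strictly between the barrier `H_G` and the special solution `((γ-1)²/4) U²`. -/
theorem stmt15 (γ μ : ℝ) (hγ1 : 1 < γ) (hγ3 : γ < 3) (hμ0 : 0 < μ) (hμ1 : μ < 1) :
    ∃ H : ℝ → ℝ,
      ContinuousOn H (Icc (1 : ℝ) (UD γ)) ∧
      H 1 = 0 ∧
      H (UD γ) = HD γ ∧
      (∀ U ∈ Ioo (1 : ℝ) (UD γ), HG γ μ U < H U ∧ H U < (γ - 1) ^ 2 / 4 * U ^ 2) ∧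
      (∀ U ∈ Ioo (1 : ℝ) (UD γ), DifferentiableAt ℝ H U ∧
        deriv H U * G γ μ (H U) U = F γ μ (H U) U) ∧
      Tendsto (fun U : ℝ => H U / (U - 1)) (𝓝[>] (1 : ℝ))
        (𝓝 (γ * (1 - μ) / (1 + k₂ γ μ))) :=
  stmt15_general hγ1 hγ3 hμ1
end
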